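/- For every ordinal α < 1^∞, the set {γ : γ <₁ α} of strict ≤₁-predecessors of α has a greatest element if and only if it is nonempty and α has a trivial ≤₂-reach, i.e., there is no ordinal β with α <₂ β. -/

import Mathlib

open FirstOrder

/-- The relation symbols of the language of `ℛ₂`: three binary relations. -/
inductive ordRel : ℕ → Type
  | le : ordRel 2
  | le1 : ordRel 2
  | le2 : ordRel 2

/-- The first-order language with three binary relation symbols `≤`, `≤₁`, `≤₂`. -/
def ordLang : FirstOrder.Language := ⟨fun _ => Empty, ordRel⟩

/-- The `ordLang`-structure on the set of ordinals below `β`, interpreting the three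
relation symbols by `≤` and the given relations `le1`, `le2`. -/
def segStr (le1 le2 : Ordinal → Ordinal → Prop) (β : Ordinal) :
    ordLang.Structure {x : Ordinal // x < β} where
  funMap := fun f => Empty.elim f
  RelMap
    | .le => fun v => (v 0).1 ≤ (v 1).1
    | .le1 => fun v => le1 (v 0).1 (v 1).1
    | .le2 => fun v => le2 (v 0).1 (v 1).1

/-- Σ₁-formulas: a block of existential quantifiers applied to a quantifier-free formula. -/
inductive IsSigma1 {L : FirstOrder.Language} {α : Type} :
    {n : ℕ} → L.BoundedFormula α n → Prop
  | of_isQF {n} {φ : L.BoundedFormula α n} (h : φ.IsQF) : IsSigma1 φ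
  | ex {n} {φ : L.BoundedFormula α (n + 1)} (h : IsSigma1 φ) : IsSigma1 φ.ex

/-- Π₁-formulas: a block of universal quantifiers applied to a quantifier-free formula. -/
inductive IsPi1 {L : FirstOrder.Language} {α : Type} :
    {n : ℕ} → L.BoundedFormula α n → Prop
  | of_isQF {n} {φ : L.BoundedFormula α n} (h : φ.IsQF) : IsPi1 φ
  | all {n} {φ : L.BoundedFormula α (n + 1)} (h : IsPi1 φ) : IsPi1 φ.all

/-- Σ₂-formulas: a block of existential quantifiers applied to a Π₁-formula. -/
inductive IsSigma2 {L : FirstOrder.Language} {α : Type} :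
    {n : ℕ} → L.BoundedFormula α n → Prop
  | of_isPi1 {n} {φ : L.BoundedFormula α n} (h : IsPi1 φ) : IsSigma2 φ
  | ex {n} {φ : L.BoundedFormula α (n + 1)} (h : IsSigma2 φ) : IsSigma2 φ.ex

/-- Realization of a formula with `k` parameters in the segment structure below `β`. -/
def RealizeIn (le1 le2 : Ordinal → Ordinal → Prop) (β : Ordinal) {k : ℕ}
    (φ : ordLang.Formula (Fin k)) (v : Fin k → {x : Ordinal // x < β}) : Prop :=
  letI := segStr le1 le2 β
  φ.Realize v

/-- `a ≤ b` and the segment below `a` is an elementary substructure of the segment below `b`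
with respect to the class `C` of formulas (with parameters from below `a`). -/
def ElemSub (C : ∀ k : ℕ, ordLang.Formula (Fin k) → Prop)
    (le1 le2 : Ordinal → Ordinal → Prop) (a b : Ordinal) : Prop :=
  ∃ hab : a ≤ b,
    ∀ (k : ℕ) (φ : ordLang.Formula (Fin k)), C k φ →
      ∀ v : Fin k → {x : Ordinal // x < a},
        RealizeIn le1 le2 a φ v ↔
          RealizeIn le1 le2 b φ (fun j => ⟨(v j).1, lt_of_lt_of_le (v j).2 hab⟩)

/-- The pair of relations `le1`, `le2` satisfies the simultaneous recursive definition of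
`≤₁` and `≤₂` on the ordinals: `α ≤ᵢ β` iff `α ≤ β` and the segment below `α` is a
Σᵢ-elementary substructure of the segment below `β`. -/
def IsR2Pair (le1 le2 : Ordinal → Ordinal → Prop) : Prop :=
  (∀ a b, le1 a b ↔ ElemSub (fun _ φ => IsSigma1 φ) le1 le2 a b) ∧
  (∀ a b, le2 a b ↔ ElemSub (fun _ φ => IsSigma2 φ) le1 le2 a b)

/-- The strict part of `≤₁`. -/
def Lt1 (le1 : Ordinal → Ordinal → Prop) (a b : Ordinal) : Prop := le1 a b ∧ a ≠ b

/-- The strict part of `≤₂`. -/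
def Lt2 (le2 : Ordinal → Ordinal → Prop) (a b : Ordinal) : Prop := le2 a b ∧ a ≠ b

/-- `1^∞`: the least ordinal `ν` such that below `ν` there are `<₂`-chains of every finite
length. -/
noncomputable def OneInfty (le2 : Ordinal → Ordinal → Prop) : Ordinal :=
  sInf {ν : Ordinal | ∀ n : ℕ, ∃ β : Fin n → Ordinal,
    (∀ i, β i < ν) ∧
    ∀ (i : ℕ) (hi : i + 1 < n), Lt2 le2 (β ⟨i, Nat.lt_of_succ_lt hi⟩) (β ⟨i + 1, hi⟩)}

/-- A respecting forest of order 2: a finite structure with a linear order `≤₀` and partial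
orders `≤₁`, `≤₂` which are forests, with `≤₂ ⊆ ≤₁ ⊆ ≤₀`, and `≤ᵢ₊₁` respecting `≤ᵢ`. -/
structure RForest where
  P : Type
  [fintypeP : Fintype P]
  le0 : P → P → Prop
  le1 : P → P → Prop
  le2 : P → P → Prop
  le0_refl : ∀ p, le0 p p
  le0_trans : ∀ p q r, le0 p q → le0 q r → le0 p r
  le0_antisymm : ∀ p q, le0 p q → le0 q p → p = q
  le0_total : ∀ p q, le0 p q ∨ le0 q p
  le1_refl : ∀ p, le1 p p
  le1_trans : ∀ p q r, le1 p q → le1 q r → le1 p r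
  le1_antisymm : ∀ p q, le1 p q → le1 q p → p = q
  le2_refl : ∀ p, le2 p p
  le2_trans : ∀ p q r, le2 p q → le2 q r → le2 p r
  le2_antisymm : ∀ p q, le2 p q → le2 q p → p = q
  le2_sub_le1 : ∀ p q, le2 p q → le1 p q
  le1_sub_le0 : ∀ p q, le1 p q → le0 p q
  forest1 : ∀ p q r, le1 q p → le1 r p → le1 q r ∨ le1 r q
  forest2 : ∀ p q r, le2 q p → le2 r p → le2 q r ∨ le2 r q
  respects1 : ∀ p q r, le0 p q → le0 q r → le1 p r → le1 p q
  respects2 : ∀ p q r, le1 p q → le1 q r → le2 p r → le2 p q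

attribute [instance] RForest.fintypeP

/-- The finite set `X` of ordinals, with the relations induced from `ℛ₂`, is isomorphic to the
respecting forest `F`. -/
def Realizes (le1 le2 : Ordinal → Ordinal → Prop) (F : RForest) (X : Finset Ordinal) : Prop :=
  ∃ e : F.P ≃ {x // x ∈ X}, ∀ p q : F.P,
    (F.le0 p q ↔ ((e p : Ordinal) ≤ (e q : Ordinal))) ∧
    (F.le1 p q ↔ le1 (e p : Ordinal) (e q : Ordinal)) ∧
    (F.le2 p q ↔ le2 (e p : Ordinal) (e q : Ordinal))

/-- Pointwise comparison of two finite sets of ordinals via their increasing enumerations. -/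
def pwLE (X Y : Finset Ordinal) : Prop :=
  ∃ h : X.card = Y.card, ∀ i : Fin X.card,
    ((X.orderIsoOfFin rfl i : {x // x ∈ X}) : Ordinal) ≤
      ((Y.orderIsoOfFin h.symm i : {x // x ∈ Y}) : Ordinal)

/-- `X` is the isominimal realization of the respecting forest `F` in `ℛ₂`: it is isomorphic
to `F` and pointwise minimal among all finite substructures of `ℛ₂` isomorphic to `F`. -/
def IsIsominimalRealization (le1 le2 : Ordinal → Ordinal → Prop) (F : RForest)
    (X : Finset Ordinal) : Prop :=
  Realizes le1 le2 F X ∧ ∀ Y : Finset Ordinal, Realizes le1 le2 F Y → pwLE X Y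

/-- A covering of the respecting forest `F` into `ℛ₂`. -/
def IsCovering (le1 le2 : Ordinal → Ordinal → Prop) (F : RForest)
    (c : F.P → Ordinal) : Prop :=
  (∀ p q, F.le0 p q ↔ c p ≤ c q) ∧
  (∀ p q, F.le1 p q → le1 (c p) (c q)) ∧
  (∀ p q, F.le2 p q → le2 (c p) (c q))


/-- A covering of the respecting forest `F` into the respecting forest `G`. -/
def ForestCovering (F G : RForest) (f : F.P → G.P) : Prop :=
  (∀ p q, F.le0 p q ↔ G.le0 (f p) (f q)) ∧
  (∀ p q, F.le1 p q → G.le1 (f p) (f q)) ∧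
  (∀ p q, F.le2 p q → G.le2 (f p) (f q))


section PartA

open FirstOrder FirstOrder.Language

def IsoOn (le1 le2 : Ordinal → Ordinal → Prop) (S : Finset Ordinal) (f : Ordinal → Ordinal) :
    Prop :=
  ∀ u ∈ S, ∀ v ∈ S, (u ≤ v ↔ f u ≤ f v) ∧ (le1 u v ↔ le1 (f u) (f v)) ∧
    (le2 u v ↔ le2 (f u) (f v))

def RealB (le1 le2 : Ordinal → Ordinal → Prop) (b : Ordinal) {k n : ℕ}
    (φ : ordLang.BoundedFormula (Fin k) n) (v : Fin k → {x : Ordinal // x < b})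
    (xs : Fin n → {x : Ordinal // x < b}) : Prop :=
  letI := segStr le1 le2 b
  φ.Realize v xs

def tIx {β : Type} : ordLang.Term β → β
  | .var i => i
  | .func f _ => Empty.elim f

lemma tIx_realize {β : Type} (M : Type*) [ordLang.Structure M] (t : ordLang.Term β) (w : β → M) :
    t.realize w = w (tIx t) := by
  cases t with
  | var i => rfl
  | func f _ => exact Empty.elim f

variable {le1 le2 : Ordinal → Ordinal → Prop}

lemma qf_iso {k n : ℕ} {φ : ordLang.BoundedFormula (Fin k) n} (h : φ.IsQF)
    {a b : Ordinal} (S : Finset Ordinal) (g : Ordinal → Ordinal) (hg : IsoOn le1 le2 S g)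
    (v : Fin k → {x : Ordinal // x < a}) (xs : Fin n → {x : Ordinal // x < a})
    (v' : Fin k → {x : Ordinal // x < b}) (xs' : Fin n → {x : Ordinal // x < b})
    (hv : ∀ j, (v j).1 ∈ S) (hx : ∀ j, (xs j).1 ∈ S)
    (hv' : ∀ j, (v' j).1 = g (v j).1) (hx' : ∀ j, (xs' j).1 = g (xs j).1) :
    RealB le1 le2 a φ v xs ↔ RealB le1 le2 b φ v' xs' := by
  have hS : ∀ i : Fin k ⊕ Fin n, (Sum.elim v xs i).1 ∈ S := by
    rintro (i | i) <;> simp [hv, hx]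
  have hS' : ∀ i : Fin k ⊕ Fin n, (Sum.elim v' xs' i).1 = g (Sum.elim v xs i).1 := by
    rintro (i | i) <;> simp [hv', hx']
  unfold RealB
  letI := segStr le1 le2 a
  letI := segStr le1 le2 b
  induction h with
  | falsum => simp [BoundedFormula.Realize]
  | of_isAtomic h =>
    cases h with
    | equal t₁ t₂ =>
      simp only [BoundedFormula.realize_bdEqual, tIx_realize]
      rw [Subtype.ext_iff, Subtype.ext_iff, hS', hS']
      have h1 := (hg _ (hS (tIx t₁)) _ (hS (tIx t₂))).1
      have h2 := (hg _ (hS (tIx t₂)) _ (hS (tIx t₁))).1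
      rw [le_antisymm_iff, le_antisymm_iff, h1, h2]
    | rel R ts =>
      simp only [BoundedFormula.realize_rel, tIx_realize]
      cases R with
      | le =>
        have h1 := (hg _ (hS (tIx (ts 0))) _ (hS (tIx (ts 1)))).1
        rw [← hS', ← hS'] at h1
        exact h1
      | le1 =>
        have h1 := (hg _ (hS (tIx (ts 0))) _ (hS (tIx (ts 1)))).2.1
        rw [← hS', ← hS'] at h1
        exact h1
      | le2 =>
        have h1 := (hg _ (hS (tIx (ts 0))) _ (hS (tIx (ts 1)))).2.2
        rw [← hS', ← hS'] at h1
        exact h1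
  | imp _ _ ih1 ih2 => exact imp_congr ih1 ih2

/-- range of two tuples -/
noncomputable def rg {k n : ℕ} {b : Ordinal} (v : Fin k → {x : Ordinal // x < b})
    (xs : Fin n → {x : Ordinal // x < b}) : Finset Ordinal :=
  (Finset.univ.image fun i => (v i).1) ∪ (Finset.univ.image fun i => (xs i).1)

lemma mem_rg_l {k n : ℕ} {b : Ordinal} (v : Fin k → {x : Ordinal // x < b})
    (xs : Fin n → {x : Ordinal // x < b}) (i : Fin k) : (v i).1 ∈ rg v xs := by
  unfold rg; simp

lemma mem_rg_r {k n : ℕ} {b : Ordinal} (v : Fin k → {x : Ordinal // x < b})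
    (xs : Fin n → {x : Ordinal // x < b}) (i : Fin n) : (xs i).1 ∈ rg v xs := by
  unfold rg; simp

lemma rg_lt {k n : ℕ} {b : Ordinal} (v : Fin k → {x : Ordinal // x < b})
    (xs : Fin n → {x : Ordinal // x < b}) : ∀ y ∈ rg v xs, y < b := by
  unfold rg
  intro y hy
  simp only [Finset.mem_union, Finset.mem_image, Finset.mem_univ, true_and] at hy
  rcases hy with ⟨i, rfl⟩ | ⟨i, rfl⟩
  · exact (v i).2
  · exact (xs i).2

lemma realB_ex {k n : ℕ} {b : Ordinal} {φ : ordLang.BoundedFormula (Fin k) (n + 1)}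
    (v : Fin k → {x : Ordinal // x < b}) (xs : Fin n → {x : Ordinal // x < b}) :
    RealB le1 le2 b φ.ex v xs ↔ ∃ x, RealB le1 le2 b φ v (Fin.snoc xs x) := by
  unfold RealB
  letI := segStr le1 le2 b
  exact BoundedFormula.realize_ex

lemma realB_all {k n : ℕ} {b : Ordinal} {φ : ordLang.BoundedFormula (Fin k) (n + 1)}
    (v : Fin k → {x : Ordinal // x < b}) (xs : Fin n → {x : Ordinal // x < b}) :
    RealB le1 le2 b φ.all v xs ↔ ∀ x, RealB le1 le2 b φ v (Fin.snoc xs x) := by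
  unfold RealB
  letI := segStr le1 le2 b
  exact BoundedFormula.realize_all

lemma snoc_val {n : ℕ} {b : Ordinal} (xs : Fin n → {x : Ordinal // x < b})
    (x : {x : Ordinal // x < b}) (j : Fin (n + 1)) {p : Ordinal → Prop}
    (h1 : ∀ j, p (xs j).1) (h2 : p x.1) :
    p ((Fin.snoc xs x : Fin (n + 1) → {x : Ordinal // x < b}) j).1 := by
  induction j using Fin.lastCases with
  | last => simpa using h2
  | cast i => simpa using h1 i

lemma snoc_val2 {n : ℕ} {a b : Ordinal} (xs : Fin n → {x : Ordinal // x < b})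
    (x : {x : Ordinal // x < b}) (xs' : Fin n → {x : Ordinal // x < a})
    (x' : {x : Ordinal // x < a}) (j : Fin (n + 1)) {p : Ordinal → Ordinal → Prop}
    (h1 : ∀ j, p (xs j).1 (xs' j).1) (h2 : p x.1 x'.1) :
    p ((Fin.snoc xs x : Fin (n + 1) → {x : Ordinal // x < b}) j).1
      ((Fin.snoc xs' x' : Fin (n + 1) → {x : Ordinal // x < a}) j).1 := by
  induction j using Fin.lastCases with
  | last => simpa using h2
  | cast i => simpa using h1 i

lemma sigma1_cert {k n : ℕ} {φ : ordLang.BoundedFormula (Fin k) n} (h : IsSigma1 φ)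
    {b : Ordinal} (v : Fin k → {x : Ordinal // x < b}) (xs : Fin n → {x : Ordinal // x < b})
    (hr : RealB le1 le2 b φ v xs) :
    ∃ Y : Finset Ordinal, (∀ y ∈ Y, y < b) ∧ (∀ j, (v j).1 ∈ Y) ∧ (∀ j, (xs j).1 ∈ Y) ∧
      ∀ (a : Ordinal) (f : Ordinal → Ordinal), IsoOn le1 le2 Y f → (∀ y ∈ Y, f y < a) →
        ∀ (v' : Fin k → {x : Ordinal // x < a}) (xs' : Fin n → {x : Ordinal // x < a}),
          (∀ j, (v' j).1 = f (v j).1) → (∀ j, (xs' j).1 = f (xs j).1) →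
          RealB le1 le2 a φ v' xs' := by
  induction h with
  | of_isQF h =>
    refine ⟨rg v xs, rg_lt v xs, mem_rg_l v xs, mem_rg_r v xs, ?_⟩
    intro a f hf _ v' xs' h1 h2
    exact (qf_iso h _ f hf v xs v' xs' (mem_rg_l v xs) (mem_rg_r v xs) h1 h2).1 hr
  | ex h ih =>
    rw [realB_ex] at hr
    obtain ⟨x, hr⟩ := hr
    obtain ⟨Y, hY, h1, h2, h3⟩ := ih _ hr
    have hx : x.1 ∈ Y := by simpa using h2 (Fin.last _)
    refine ⟨Y, hY, h1, fun j => by simpa using h2 j.castSucc, ?_⟩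
    intro a f hf hfa v' xs' hv hx'
    rw [realB_ex]
    refine ⟨⟨f x.1, hfa _ hx⟩, h3 a f hf hfa _ _ hv ?_⟩
    intro j
    exact snoc_val2 xs' ⟨f x.1, hfa _ hx⟩ xs x j (p := fun s t => s = f t) hx' rfl

lemma pi1_cert {k n : ℕ} {φ : ordLang.BoundedFormula (Fin k) n} (h : IsPi1 φ) :
    ∃ m : ℕ, ∀ (c : Ordinal) (v : Fin k → {x : Ordinal // x < c})
      (xs : Fin n → {x : Ordinal // x < c}), ¬ RealB le1 le2 c φ v xs →
      ∃ Z : Finset Ordinal, (∀ z ∈ Z, z < c) ∧ Z.card ≤ m ∧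
      ∀ (d : Ordinal) (W : Finset Ordinal) (g : Ordinal → Ordinal), (∀ j, (v j).1 ∈ W) →
        (∀ j, (xs j).1 ∈ W) → IsoOn le1 le2 (Z ∪ W) g → (∀ z ∈ Z, g z < d) →
        ∀ (v' : Fin k → {x : Ordinal // x < d}) (xs' : Fin n → {x : Ordinal // x < d}),
          (∀ j, (v' j).1 = g (v j).1) → (∀ j, (xs' j).1 = g (xs j).1) →
          ¬ RealB le1 le2 d φ v' xs' := by
  induction h with
  | of_isQF h =>
    refine ⟨0, fun c v xs hr => ⟨∅, by simp, by simp, ?_⟩⟩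
    intro d W g hv hx hg _ v' xs' h1 h2 h3
    exact hr ((qf_iso h _ g hg v xs v' xs' (by simpa using hv) (by simpa using hx) h1 h2).2 h3)
  | all h ih =>
    obtain ⟨m, ih⟩ := ih
    refine ⟨m + 1, fun c v xs hr => ?_⟩
    rw [realB_all] at hr
    push Not at hr
    obtain ⟨x, hr⟩ := hr
    obtain ⟨Z, hZ, hm, h3⟩ := ih c v _ hr
    refine ⟨insert x.1 Z, ?_, (Finset.card_insert_le _ _).trans (by omega), ?_⟩
    · intro z hz
      rcases Finset.mem_insert.1 hz with rfl | hz
      · exact x.2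
      · exact hZ z hz
    intro d W g hv hx hg hgd v' xs' h1 h2
    rw [realB_all]
    push Not
    refine ⟨⟨g x.1, hgd _ (Finset.mem_insert_self _ _)⟩, h3 d (insert x.1 W) g ?_ ?_ ?_ ?_ _ _ h1 ?_⟩
    · intro j; exact Finset.mem_insert_of_mem (hv j)
    · intro j
      exact snoc_val xs x j (p := fun t => t ∈ insert x.1 W)
        (fun j => Finset.mem_insert_of_mem (hx j)) (Finset.mem_insert_self _ _)
    · intro u hu w hw
      apply hg
      · simp only [Finset.mem_union, Finset.mem_insert] at hu ⊢; tauto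
      · simp only [Finset.mem_union, Finset.mem_insert] at hw ⊢; tauto
    · intro z hz; exact hgd z (Finset.mem_insert_of_mem hz)
    · intro j
      exact snoc_val2 xs' ⟨g x.1, hgd _ (Finset.mem_insert_self _ _)⟩ xs x j
        (p := fun s t => s = g t) h2 rfl

lemma sigma2_cert {k n : ℕ} {φ : ordLang.BoundedFormula (Fin k) n} (h : IsSigma2 φ)
    {b : Ordinal} (v : Fin k → {x : Ordinal // x < b}) (xs : Fin n → {x : Ordinal // x < b})
    (hr : RealB le1 le2 b φ v xs) :
    ∃ (Y : Finset Ordinal) (m : ℕ), (∀ y ∈ Y, y < b) ∧ (∀ j, (v j).1 ∈ Y) ∧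
      (∀ j, (xs j).1 ∈ Y) ∧
      ∀ (a : Ordinal) (f : Ordinal → Ordinal), (∀ y ∈ Y, f y < a) →
        (∀ Z : Finset Ordinal, (∀ z ∈ Z, z < a) → Z.card ≤ m → ∃ g : Ordinal → Ordinal,
          IsoOn le1 le2 (Z ∪ Y.image f) g ∧ (∀ z ∈ Z, g z < b) ∧ ∀ y ∈ Y, g (f y) = y) →
        ∀ (v' : Fin k → {x : Ordinal // x < a}) (xs' : Fin n → {x : Ordinal // x < a}),
          (∀ j, (v' j).1 = f (v j).1) → (∀ j, (xs' j).1 = f (xs j).1) →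
          RealB le1 le2 a φ v' xs' := by
  induction h with
  | of_isPi1 h =>
    obtain ⟨m, hm⟩ := pi1_cert (le1 := le1) (le2 := le2) h
    refine ⟨rg v xs, m, rg_lt v xs, mem_rg_l v xs, mem_rg_r v xs, ?_⟩
    intro a f hfa hf v' xs' h1 h2
    by_contra hc
    obtain ⟨Z, hZ, hZm, hh⟩ := hm a v' xs' hc
    obtain ⟨g, hg, hgb, hgf⟩ := hf Z hZ hZm
    refine hh b ((rg v xs).image f) g ?_ ?_ hg hgb v xs ?_ ?_ hr
    · intro j; rw [h1]; exact Finset.mem_image_of_mem _ (mem_rg_l v xs j)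
    · intro j; rw [h2]; exact Finset.mem_image_of_mem _ (mem_rg_r v xs j)
    · intro j; rw [h1, hgf _ (mem_rg_l v xs j)]
    · intro j; rw [h2, hgf _ (mem_rg_r v xs j)]
  | ex h ih =>
    rw [realB_ex] at hr
    obtain ⟨x, hr⟩ := hr
    obtain ⟨Y, m, hY, h1, h2, h3⟩ := ih _ hr
    have hx : x.1 ∈ Y := by simpa using h2 (Fin.last _)
    refine ⟨Y, m, hY, h1, fun j => by simpa using h2 j.castSucc, ?_⟩
    intro a f hfa hf v' xs' hv hx'
    rw [realB_ex]
    refine ⟨⟨f x.1, hfa _ hx⟩, h3 a f hfa hf _ _ hv ?_⟩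
    intro j
    exact snoc_val2 xs' ⟨f x.1, hfa _ hx⟩ xs x j (p := fun s t => s = f t) hx' rfl

def C1 (le1 le2 : Ordinal → Ordinal → Prop) (a b : Ordinal) : Prop :=
  ∀ Y : Finset Ordinal, (∀ y ∈ Y, y < b) → ∃ f : Ordinal → Ordinal, IsoOn le1 le2 Y f ∧
    (∀ y ∈ Y, f y < a) ∧ (∀ y ∈ Y, y < a → f y = y)

def C2 (le1 le2 : Ordinal → Ordinal → Prop) (a b : Ordinal) : Prop :=
  ∀ (Y : Finset Ordinal) (m : ℕ), (∀ y ∈ Y, y < b) → ∃ f : Ordinal → Ordinal,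
    (∀ y ∈ Y, f y < a) ∧ (∀ y ∈ Y, y < a → f y = y) ∧
    ∀ Z : Finset Ordinal, (∀ z ∈ Z, z < a) → Z.card ≤ m → ∃ g : Ordinal → Ordinal,
      IsoOn le1 le2 (Z ∪ Y.image f) g ∧ (∀ z ∈ Z, g z < b) ∧ ∀ y ∈ Y, g (f y) = y

lemma C2.iso {Y : Finset Ordinal} {f g : Ordinal → Ordinal}
    (hg : IsoOn le1 le2 (∅ ∪ Y.image f) g) (h : ∀ y ∈ Y, g (f y) = y) : IsoOn le1 le2 Y f := by
  intro u hu v hv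
  have := hg (f u) (by simp; exact ⟨u, hu, rfl⟩) (f v) (by simp; exact ⟨v, hv, rfl⟩)
  rw [h u hu, h v hv] at this
  exact ⟨this.1.symm, this.2.1.symm, this.2.2.symm⟩

lemma C2.c1 {a b : Ordinal} (h : C2 le1 le2 a b) : C1 le1 le2 a b := by
  intro Y hY
  obtain ⟨f, h1, h2, h3⟩ := h Y 0 hY
  obtain ⟨g, hg, _, hgf⟩ := h3 ∅ (by simp) (by simp)
  exact ⟨f, C2.iso hg hgf, h1, h2⟩

lemma IsoOn.id (S : Finset Ordinal) : IsoOn le1 le2 S (fun x => x) :=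
  fun _ _ _ _ => ⟨Iff.rfl, Iff.rfl, Iff.rfl⟩

lemma elem1_of_C1 {a b : Ordinal} (hab : a ≤ b) (h : C1 le1 le2 a b) :
    ElemSub (fun _ φ => IsSigma1 φ) le1 le2 a b := by
  refine ⟨hab, fun k φ hφ v => ⟨fun hr => ?_, fun hr => ?_⟩⟩
  · obtain ⟨Y, hY, h1, _, h3⟩ := sigma1_cert (le1 := le1) (le2 := le2) hφ v default hr
    exact h3 b (fun x => x) (IsoOn.id _) (fun y hy => (hY y hy).trans_le hab) _ _
      (fun j => rfl) (fun j => Fin.elim0 j)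
  · obtain ⟨Y, hY, h1, _, h3⟩ := sigma1_cert (le1 := le1) (le2 := le2) hφ _ default hr
    obtain ⟨f, hf, hfa, hff⟩ := h Y hY
    exact h3 a f hf hfa v default (fun j => (hff _ (h1 j) (v j).2).symm) (fun j => Fin.elim0 j)

lemma sigma2_up {k n : ℕ} {φ : ordLang.BoundedFormula (Fin k) n} (h : IsSigma2 φ)
    {a b : Ordinal} (hab : a ≤ b) (hc : C1 le1 le2 a b)
    (v : Fin k → {x : Ordinal // x < a}) (xs : Fin n → {x : Ordinal // x < a})
    (v' : Fin k → {x : Ordinal // x < b}) (xs' : Fin n → {x : Ordinal // x < b})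
    (hv : ∀ j, (v' j).1 = (v j).1) (hx : ∀ j, (xs' j).1 = (xs j).1)
    (hr : RealB le1 le2 a φ v xs) : RealB le1 le2 b φ v' xs' := by
  induction h with
  | of_isPi1 h =>
    obtain ⟨m, hm⟩ := pi1_cert (le1 := le1) (le2 := le2) h
    by_contra hcon
    obtain ⟨Z, hZ, hZm, hh⟩ := hm b v' xs' hcon
    obtain ⟨f, hf, hfa, hff⟩ := hc (Z ∪ rg v' xs') (by
      intro y hy
      rcases Finset.mem_union.1 hy with hy | hy
      · exact hZ y hy
      · exact rg_lt _ _ y hy)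
    refine hh a (rg v' xs') f (mem_rg_l _ _) (mem_rg_r _ _) hf
      (fun z hz => hfa z (Finset.mem_union_left _ hz)) v xs ?_ ?_ hr
    · intro j
      rw [hff _ (Finset.mem_union_right _ (mem_rg_l _ _ j)) (by rw [hv]; exact (v j).2), hv]
    · intro j
      rw [hff _ (Finset.mem_union_right _ (mem_rg_r _ _ j)) (by rw [hx]; exact (xs j).2), hx]
  | ex h ih =>
    rw [realB_ex] at hr ⊢
    obtain ⟨x, hr⟩ := hr
    refine ⟨⟨x.1, x.2.trans_le hab⟩, ih _ _ ?_ hr⟩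
    intro j
    exact snoc_val2 xs' ⟨x.1, x.2.trans_le hab⟩ xs x j (p := fun s t => s = t) hx rfl

lemma elem2_of_C2 {a b : Ordinal} (hab : a ≤ b) (h : C2 le1 le2 a b) :
    ElemSub (fun _ φ => IsSigma2 φ) le1 le2 a b := by
  refine ⟨hab, fun k φ hφ v => ⟨fun hr => ?_, fun hr => ?_⟩⟩
  · exact sigma2_up hφ hab h.c1 v default _ default (fun j => rfl) (fun j => Fin.elim0 j) hr
  · obtain ⟨Y, m, hY, h1, _, h3⟩ := sigma2_cert (le1 := le1) (le2 := le2) hφ _ default hr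
    obtain ⟨f, hfa, hff, hf⟩ := h Y m hY
    exact h3 a f hfa hf v default (fun j => (hff _ (h1 j) (v j).2).symm) (fun j => Fin.elim0 j)

/-- the three relation symbols -/
def rs : Fin 3 → ordLang.Relations 2
  | 0 => ordRel.le
  | 1 => ordRel.le1
  | 2 => ordRel.le2

def rel3 (le1 le2 : Ordinal → Ordinal → Prop) : Fin 3 → Ordinal → Ordinal → Prop
  | 0 => (· ≤ ·)
  | 1 => le1
  | 2 => le2

def typ (le1 le2 : Ordinal → Ordinal → Prop) {ι : Type} {b : Ordinal}
    (p : ι → {x : Ordinal // x < b}) : ι → ι → Fin 3 → Prop :=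
  fun i j r => rel3 le1 le2 r (p i).1 (p j).1

lemma typ_map {ι : Type} {a b : Ordinal}
    (p : ι → {x : Ordinal // x < a}) (p' : ι → {x : Ordinal // x < b})
    (h : typ le1 le2 p = typ le1 le2 p') :
    ∃ g : Ordinal → Ordinal, (∀ i, g (p i).1 = (p' i).1) ∧
      ∀ S : Finset Ordinal, (∀ s ∈ S, ∃ i, s = (p i).1) → IsoOn le1 le2 S g := by
  classical
  have hle : ∀ i j, (p i).1 ≤ (p j).1 ↔ (p' i).1 ≤ (p' j).1 := fun i j =>
    iff_of_eq (congrFun (congrFun (congrFun h i) j) 0)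
  have h1 : ∀ i j, le1 (p i).1 (p j).1 ↔ le1 (p' i).1 (p' j).1 := fun i j =>
    iff_of_eq (congrFun (congrFun (congrFun h i) j) 1)
  have h2 : ∀ i j, le2 (p i).1 (p j).1 ↔ le2 (p' i).1 (p' j).1 := fun i j =>
    iff_of_eq (congrFun (congrFun (congrFun h i) j) 2)
  have hg : ∀ i, (if hs : ∃ j, (p j).1 = (p i).1 then (p' hs.choose).1 else 0) = (p' i).1 := by
    intro i
    have hs : ∃ j, (p j).1 = (p i).1 := ⟨i, rfl⟩
    rw [dif_pos hs]
    have := hs.choose_spec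
    exact le_antisymm ((hle _ _).1 this.le) ((hle _ _).1 this.ge)
  refine ⟨fun s => if hs : ∃ j, (p j).1 = s then (p' hs.choose).1 else 0, hg, ?_⟩
  intro S hS u hu v hv
  obtain ⟨i, rfl⟩ := hS u hu
  obtain ⟨j, rfl⟩ := hS v hv
  dsimp only
  rw [hg, hg]
  exact ⟨hle i j, h1 i j, h2 i j⟩

open Classical in
noncomputable def litF {k n : ℕ} (i j : Fin k ⊕ Fin n) (r : Fin 3) (c : Prop) :
    ordLang.BoundedFormula (Fin k) n :=
  if c then (rs r).boundedFormula₂ (Term.var i) (Term.var j)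
  else ∼((rs r).boundedFormula₂ (Term.var i) (Term.var j))

noncomputable def diagF {k n : ℕ} (t : Fin k ⊕ Fin n → Fin k ⊕ Fin n → Fin 3 → Prop) :
    ordLang.BoundedFormula (Fin k) n :=
  BoundedFormula.iInf fun q : ((Fin k ⊕ Fin n) × (Fin k ⊕ Fin n)) × Fin 3 =>
    litF q.1.1 q.1.2 q.2 (t q.1.1 q.1.2 q.2)

noncomputable def typF {k n : ℕ} (S : Set (Fin k ⊕ Fin n → Fin k ⊕ Fin n → Fin 3 → Prop)) :
    ordLang.BoundedFormula (Fin k) n :=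
  BoundedFormula.iSup fun t : S => diagF t.1

lemma isQF_foldr_inf {k n : ℕ} (l : List (ordLang.BoundedFormula (Fin k) n))
    (h : ∀ φ ∈ l, φ.IsQF) : (l.foldr (· ⊓ ·) ⊤).IsQF := by
  induction l with
  | nil => exact BoundedFormula.IsQF.top
  | cons a l ih =>
    exact (h a (by simp)).inf (ih fun φ hφ => h φ (by simp [hφ]))

lemma isQF_foldr_sup {k n : ℕ} (l : List (ordLang.BoundedFormula (Fin k) n))
    (h : ∀ φ ∈ l, φ.IsQF) : (l.foldr (· ⊔ ·) ⊥).IsQF := by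
  induction l with
  | nil => exact BoundedFormula.isQF_bot
  | cons a l ih =>
    exact (h a (by simp)).sup (ih fun φ hφ => h φ (by simp [hφ]))

lemma typF_isQF {k n : ℕ} (S : Set (Fin k ⊕ Fin n → Fin k ⊕ Fin n → Fin 3 → Prop)) :
    (typF S).IsQF := by
  unfold typF BoundedFormula.iSup
  apply isQF_foldr_sup
  intro φ hφ
  simp only [List.mem_map] at hφ
  obtain ⟨t, _, rfl⟩ := hφ
  unfold diagF BoundedFormula.iInf
  apply isQF_foldr_inf
  intro φ hφ
  simp only [List.mem_map] at hφ
  obtain ⟨q, _, rfl⟩ := hφ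
  unfold litF
  split_ifs
  · exact (BoundedFormula.IsAtomic.rel _ _).isQF
  · exact (BoundedFormula.IsAtomic.rel _ _).isQF.not

lemma realB_typF {k n : ℕ} {b : Ordinal}
    (S : Set (Fin k ⊕ Fin n → Fin k ⊕ Fin n → Fin 3 → Prop))
    (v : Fin k → {x : Ordinal // x < b}) (xs : Fin n → {x : Ordinal // x < b}) :
    RealB le1 le2 b (typF S) v xs ↔ typ le1 le2 (Sum.elim v xs) ∈ S := by
  unfold RealB
  letI := segStr le1 le2 b
  have hlit : ∀ (i j : Fin k ⊕ Fin n) (r : Fin 3) (c : Prop),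
      (litF i j r c).Realize v xs ↔ (rel3 le1 le2 r (Sum.elim v xs i).1 (Sum.elim v xs j).1 ↔ c) := by
    intro i j r c
    have h0 : ((rs r).boundedFormula₂ (Term.var i) (Term.var j) :
        ordLang.BoundedFormula (Fin k) n).Realize v xs ↔
        rel3 le1 le2 r (Sum.elim v xs i).1 (Sum.elim v xs j).1 := by
      rw [BoundedFormula.realize_rel₂]
      match r with
      | 0 => exact Iff.rfl
      | 1 => exact Iff.rfl
      | 2 => exact Iff.rfl
    unfold litF
    split_ifs with hc
    · rw [h0]; simp [hc]
    · rw [BoundedFormula.realize_not, h0]; simp [hc]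
  have hd : ∀ t, (diagF t).Realize v xs ↔ typ le1 le2 (Sum.elim v xs) = t := by
    intro t
    unfold diagF
    rw [BoundedFormula.realize_iInf]
    constructor
    · intro h
      funext i j r
      exact propext ((hlit _ _ _ _).1 (h ((i, j), r)))
    · rintro rfl q
      exact (hlit _ _ _ _).2 Iff.rfl
  show (typF S).Realize v xs ↔ _
  unfold typF
  rw [BoundedFormula.realize_iSup]
  constructor
  · rintro ⟨t, ht⟩
    rw [(hd _).1 ht]
    exact t.2
  · intro h
    exact ⟨⟨_, h⟩, (hd _).2 rfl⟩

lemma sigma1_exs {k n : ℕ} {φ : ordLang.BoundedFormula (Fin k) n} (h : IsSigma1 φ) :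
    IsSigma1 φ.exs := by
  induction n with
  | zero => exact h
  | succ n ih => exact ih (IsSigma1.ex h)

lemma sigma2_exs {k n : ℕ} {φ : ordLang.BoundedFormula (Fin k) n} (h : IsSigma2 φ) :
    IsSigma2 φ.exs := by
  induction n with
  | zero => exact h
  | succ n ih => exact ih (IsSigma2.ex h)

lemma realizeIn_exs {k n : ℕ} {b : Ordinal} {φ : ordLang.BoundedFormula (Fin k) n}
    (v : Fin k → {x : Ordinal // x < b}) :
    RealizeIn le1 le2 b φ.exs v ↔ ∃ xs, RealB le1 le2 b φ v xs := by
  unfold RealizeIn RealB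
  letI := segStr le1 le2 b
  exact BoundedFormula.realize_exs

def allsM {k n : ℕ} : (m : ℕ) → ordLang.BoundedFormula (Fin k) (n + m) →
    ordLang.BoundedFormula (Fin k) n
  | 0, φ => φ
  | m + 1, φ => allsM m φ.all

lemma allsM_pi1 {k n : ℕ} (m : ℕ) (φ : ordLang.BoundedFormula (Fin k) (n + m)) (h : IsPi1 φ) :
    IsPi1 (allsM m φ) := by
  induction m with
  | zero => exact h
  | succ m ih => exact ih _ (IsPi1.all h)

lemma realB_allsM {k n : ℕ} {b : Ordinal} (m : ℕ) (φ : ordLang.BoundedFormula (Fin k) (n + m))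
    (v : Fin k → {x : Ordinal // x < b}) (xs : Fin n → {x : Ordinal // x < b}) :
    RealB le1 le2 b (allsM m φ) v xs ↔
      ∀ w : Fin m → {x : Ordinal // x < b}, RealB le1 le2 b φ v (Fin.append xs w) := by
  induction m with
  | zero =>
    constructor
    · intro h w
      have : Fin.append xs w = xs := by
        funext i
        exact Fin.append_left xs w i
      rw [this]; exact h
    · intro h
      have := h Fin.elim0
      have h2 : Fin.append xs (Fin.elim0 : Fin 0 → {x : Ordinal // x < b}) = xs := by
        funext i
        exact Fin.append_left xs _ i
      rw [h2] at this; exact this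
  | succ m ih =>
    show RealB le1 le2 b (allsM m φ.all) v xs ↔ _
    rw [ih]
    constructor
    · intro h w
      have := (realB_all _ _).1 (h (Fin.init w)) (w (Fin.last m))
      rw [← Fin.append_snoc, Fin.snoc_init_self] at this
      exact this
    · intro h w
      rw [realB_all]
      intro x
      have := h (Fin.snoc w x)
      rw [Fin.append_snoc] at this
      exact this

lemma C1_of_elem1 {a b : Ordinal} (h : ElemSub (fun _ φ => IsSigma1 φ) le1 le2 a b) :
    C1 le1 le2 a b := by
  classical
  obtain ⟨hab, h⟩ := h
  intro Y hY
  let Ya := Y.filter (· < a)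
  let v : Fin Ya.card → {x : Ordinal // x < a} := fun i =>
    ⟨(Ya.equivFin.symm i).1, (Finset.mem_filter.1 (Ya.equivFin.symm i).2).2⟩
  let u : Fin Y.card → {x : Ordinal // x < b} := fun i =>
    ⟨(Y.equivFin.symm i).1, hY _ (Y.equivFin.symm i).2⟩
  let vb : Fin Ya.card → {x : Ordinal // x < b} := fun j => ⟨(v j).1, (v j).2.trans_le hab⟩
  let t := typ le1 le2 (Sum.elim vb u)
  have hb : RealizeIn le1 le2 b (typF {t}).exs vb :=
    (realizeIn_exs _).2 ⟨u, (realB_typF _ _ _).2 rfl⟩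
  have ha := (h _ (typF {t}).exs (sigma1_exs (IsSigma1.of_isQF (typF_isQF _))) v).2 hb
  obtain ⟨u', hu'⟩ := (realizeIn_exs _).1 ha
  have ht : typ le1 le2 (Sum.elim v u') = t :=
    Set.mem_singleton_iff.1 ((realB_typF _ _ _).1 hu')
  obtain ⟨g, hg, hgS⟩ := typ_map _ _ ht.symm
  have hu : ∀ y ∈ Y, ∃ i, y = (u i).1 := fun y hy => ⟨Y.equivFin ⟨y, hy⟩, by simp [u]⟩
  refine ⟨g, hgS Y fun y hy => ?_, fun y hy => ?_, fun y hy hya => ?_⟩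
  · obtain ⟨i, hi⟩ := hu y hy
    exact ⟨Sum.inr i, hi⟩
  · obtain ⟨i, rfl⟩ := hu y hy
    have := hg (Sum.inr i)
    simp only [Sum.elim_inr] at this
    rw [this]; exact (u' i).2
  · have hy' : y ∈ Ya := Finset.mem_filter.2 ⟨hy, hya⟩
    have := hg (Sum.inl (Ya.equivFin ⟨y, hy'⟩))
    simpa [vb, v] using this

lemma C2_aux {a b : Ordinal} (h : ElemSub (fun _ φ => IsSigma2 φ) le1 le2 a b)
    (Y : Finset Ordinal) (m : ℕ) (hY : ∀ y ∈ Y, y < b) (hm : m = 0 ∨ 0 < a) :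
    ∃ f : Ordinal → Ordinal,
    (∀ y ∈ Y, f y < a) ∧ (∀ y ∈ Y, y < a → f y = y) ∧
    ∀ Z : Finset Ordinal, (∀ z ∈ Z, z < a) → Z.card ≤ m → ∃ g : Ordinal → Ordinal,
      IsoOn le1 le2 (Z ∪ Y.image f) g ∧ (∀ z ∈ Z, g z < b) ∧ ∀ y ∈ Y, g (f y) = y := by
  classical
  obtain ⟨hab, h⟩ := h
  let Ya := Y.filter (· < a)
  let v : Fin Ya.card → {x : Ordinal // x < a} := fun i =>
    ⟨(Ya.equivFin.symm i).1, (Finset.mem_filter.1 (Ya.equivFin.symm i).2).2⟩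
  let u : Fin Y.card → {x : Ordinal // x < b} := fun i =>
    ⟨(Y.equivFin.symm i).1, hY _ (Y.equivFin.symm i).2⟩
  let vb : Fin Ya.card → {x : Ordinal // x < b} := fun j => ⟨(v j).1, (v j).2.trans_le hab⟩
  let S := Set.range fun w : Fin m → {x : Ordinal // x < b} =>
    typ le1 le2 (Sum.elim vb (Fin.append u w))
  have hb : RealizeIn le1 le2 b (allsM m (typF S)).exs vb :=
    (realizeIn_exs _).2 ⟨u, (realB_allsM _ _ _ _).2 fun w => (realB_typF _ _ _).2 ⟨w, rfl⟩⟩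
  have ha := (h _ (allsM m (typF S)).exs
    (sigma2_exs (IsSigma2.of_isPi1 (allsM_pi1 _ _ (IsPi1.of_isQF (typF_isQF _))))) v).2 hb
  obtain ⟨u', hu'⟩ := (realizeIn_exs _).1 ha
  have ht : ∀ w : Fin m → {x : Ordinal // x < a}, ∃ w2 : Fin m → {x : Ordinal // x < b},
      typ le1 le2 (Sum.elim v (Fin.append u' w)) = typ le1 le2 (Sum.elim vb (Fin.append u w2)) := by
    intro w
    obtain ⟨w2, h2⟩ := (realB_typF _ _ _).1 ((realB_allsM _ _ _ _).1 hu' w)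
    exact ⟨w2, h2.symm⟩
  let f : Ordinal → Ordinal := fun y => if hy : y ∈ Y then (u' (Y.equivFin ⟨y, hy⟩)).1 else 0
  have hf : ∀ y (hy : y ∈ Y), f y = (u' (Y.equivFin ⟨y, hy⟩)).1 := fun y hy => dif_pos hy
  have hw0 : ∃ w : Fin m → {x : Ordinal // x < a}, True := by
    rcases hm with rfl | hm
    · exact ⟨Fin.elim0, trivial⟩
    · exact ⟨fun _ => ⟨0, hm⟩, trivial⟩
  refine ⟨f, fun y hy => ?_, fun y hy hya => ?_, fun Z hZ hZm => ?_⟩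
  · rw [hf y hy]; exact (u' _).2
  · obtain ⟨w, -⟩ := hw0
    obtain ⟨w2, hw⟩ := ht w
    have hy' : y ∈ Ya := Finset.mem_filter.2 ⟨hy, hya⟩
    obtain ⟨g, hg, hgS⟩ := typ_map _ _ hw.symm
    have h1 := hg (Sum.inl (Ya.equivFin ⟨y, hy'⟩))
    have h2 := hg (Sum.inr (Fin.castAdd m (Y.equivFin ⟨y, hy⟩)))
    simp only [Sum.elim_inl, Sum.elim_inr, Fin.append_left, vb, v, u, Equiv.symm_apply_apply] at h1 h2
    rw [hf y hy, ← h2, h1]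
  · have hw : ∃ w : Fin m → {x : Ordinal // x < a}, ∀ z ∈ Z, ∃ i, z = (w i).1 := by
      rcases hm with rfl | hm
      · have : Z = ∅ := by simpa using hZm
        subst this
        exact ⟨Fin.elim0, by simp⟩
      · refine ⟨fun i => if hi : i.1 < Z.card then
          ⟨(Z.equivFin.symm ⟨i.1, hi⟩).1, hZ _ (Z.equivFin.symm ⟨i.1, hi⟩).2⟩ else ⟨0, hm⟩, ?_⟩
        intro z hz
        refine ⟨⟨(Z.equivFin ⟨z, hz⟩).1, (Z.equivFin ⟨z, hz⟩).2.trans_le hZm⟩, ?_⟩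
        simp
    obtain ⟨w, hw⟩ := hw
    obtain ⟨w2, hw2⟩ := ht w
    obtain ⟨g, hg, hgS⟩ := typ_map _ _ hw2
    refine ⟨g, hgS _ ?_, ?_, ?_⟩
    · intro s hs
      rcases Finset.mem_union.1 hs with hs | hs
      · obtain ⟨i, rfl⟩ := hw s hs
        exact ⟨Sum.inr (Fin.natAdd _ i), by simp⟩
      · obtain ⟨y, hy, rfl⟩ := Finset.mem_image.1 hs
        exact ⟨Sum.inr (Fin.castAdd m (Y.equivFin ⟨y, hy⟩)), by simp [hf y hy]⟩
    · intro z hz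
      obtain ⟨i, rfl⟩ := hw z hz
      have := hg (Sum.inr (Fin.natAdd _ i))
      simp only [Sum.elim_inr, Fin.append_right] at this
      rw [this]; exact (w2 i).2
    · intro y hy
      have := hg (Sum.inr (Fin.castAdd m (Y.equivFin ⟨y, hy⟩)))
      simp only [Sum.elim_inr, Fin.append_left, u, Equiv.symm_apply_apply] at this
      rw [hf y hy, this]

lemma C2_of_elem2 {a b : Ordinal} (h : ElemSub (fun _ φ => IsSigma2 φ) le1 le2 a b) :
    C2 le1 le2 a b := by
  intro Y m hY
  rcases eq_or_ne a 0 with rfl | ha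
  · obtain ⟨f, h1, h2, h3⟩ := C2_aux h Y 0 hY (Or.inl rfl)
    refine ⟨f, h1, h2, fun Z hZ hm => h3 Z hZ ?_⟩
    have : Z = ∅ := by
      apply Finset.eq_empty_of_forall_notMem
      intro z hz
      exact absurd (hZ z hz) (by simp)
    simp [this]
  · exact C2_aux h Y m hY (Or.inr (pos_iff_ne_zero.2 ha))

structure Ax (le1 le2 : Ordinal → Ordinal → Prop) : Prop where
  ch1 : ∀ a b, le1 a b ↔ a ≤ b ∧ C1 le1 le2 a b
  ch2 : ∀ a b, le2 a b ↔ a ≤ b ∧ C2 le1 le2 a b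

lemma IsR2Pair.ax (h : IsR2Pair le1 le2) : Ax le1 le2 where
  ch1 a b := by
    rw [h.1]
    exact ⟨fun h => ⟨h.1, C1_of_elem1 h⟩, fun h => elem1_of_C1 h.1 h.2⟩
  ch2 a b := by
    rw [h.2]
    exact ⟨fun h => ⟨h.1, C2_of_elem2 h⟩, fun h => elem2_of_C2 h.1 h.2⟩

end PartA

section PartB

variable {le1 le2 : Ordinal → Ordinal → Prop}

lemma IsoOn.mono {S T : Finset Ordinal} {f : Ordinal → Ordinal} (h : IsoOn le1 le2 T f)
    (hs : S ⊆ T) : IsoOn le1 le2 S f := fun u hu v hv => h u (hs hu) v (hs hv)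

lemma IsoOn.lt {S : Finset Ordinal} {f : Ordinal → Ordinal} (h : IsoOn le1 le2 S f)
    {u v : Ordinal} (hu : u ∈ S) (hv : v ∈ S) : u < v ↔ f u < f v := by
  rw [← not_le, ← not_le, (h v hv u hu).1]

lemma IsoOn.inj {S : Finset Ordinal} {f : Ordinal → Ordinal} (h : IsoOn le1 le2 S f)
    {u v : Ordinal} (hu : u ∈ S) (hv : v ∈ S) (e : f u = f v) : u = v :=
  le_antisymm ((h u hu v hv).1.2 e.le) ((h v hv u hu).1.2 e.ge)

lemma IsoOn.comp {S : Finset Ordinal} {f g : Ordinal → Ordinal} (h : IsoOn le1 le2 S f)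
    (h' : IsoOn le1 le2 (S.image f) g) : IsoOn le1 le2 S (fun x => g (f x)) := by
  intro u hu v hv
  have h1 := h u hu v hv
  have h2 := h' (f u) (Finset.mem_image_of_mem _ hu) (f v) (Finset.mem_image_of_mem _ hv)
  exact ⟨h1.1.trans h2.1, h1.2.1.trans h2.2.1, h1.2.2.trans h2.2.2⟩

lemma fin_bd {c : Ordinal} {P : Ordinal → Prop} (hc : 0 < c)
    (h : ∀ w < c, ∃ w' < c, w < w' ∧ P w') (Y : Finset Ordinal) (hY : ∀ y ∈ Y, y < c) :
    ∃ w' < c, P w' ∧ ∀ y ∈ Y, y < w' := by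
  have h1 : Y.sup (fun y => y) < c := (Finset.sup_lt_iff (by simpa using hc)).2 hY
  obtain ⟨w', h2, h3, h4⟩ := h _ h1
  exact ⟨w', h2, h4, fun y hy => (Finset.le_sup (f := fun y => y) hy).trans_lt h3⟩

namespace Ax

lemma le_of1 (A : Ax le1 le2) {a b : Ordinal} (h : le1 a b) : a ≤ b := ((A.ch1 a b).1 h).1

lemma le_of2 (A : Ax le1 le2) {a b : Ordinal} (h : le2 a b) : a ≤ b := ((A.ch2 a b).1 h).1

lemma c1 (A : Ax le1 le2) {a b : Ordinal} (h : le1 a b) : C1 le1 le2 a b := ((A.ch1 a b).1 h).2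

lemma c2 (A : Ax le1 le2) {a b : Ordinal} (h : le2 a b) : C2 le1 le2 a b := ((A.ch2 a b).1 h).2

lemma le21 (A : Ax le1 le2) {a b : Ordinal} (h : le2 a b) : le1 a b :=
  (A.ch1 a b).2 ⟨A.le_of2 h, (A.c2 h).c1⟩

lemma refl1 (A : Ax le1 le2) (a : Ordinal) : le1 a a :=
  (A.ch1 a a).2 ⟨le_rfl, fun Y hY => ⟨fun x => x, IsoOn.id Y, hY, fun _ _ _ => rfl⟩⟩

lemma refl2 (A : Ax le1 le2) (a : Ordinal) : le2 a a :=
  (A.ch2 a a).2 ⟨le_rfl, fun Y m hY => ⟨fun x => x, hY, fun _ _ _ => rfl,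
    fun Z hZ _ => ⟨fun x => x, IsoOn.id _, hZ, fun _ _ => rfl⟩⟩⟩

lemma trans1 (A : Ax le1 le2) {a b c : Ordinal} (h : le1 a b) (h' : le1 b c) : le1 a c := by
  refine (A.ch1 a c).2 ⟨(A.le_of1 h).trans (A.le_of1 h'), fun Y hY => ?_⟩
  obtain ⟨f, hf, hfb, hfi⟩ := A.c1 h' Y hY
  obtain ⟨g, hg, hga, hgi⟩ := A.c1 h (Y.image f) (by
    intro y hy
    obtain ⟨z, hz, rfl⟩ := Finset.mem_image.1 hy
    exact hfb z hz)
  refine ⟨_, hf.comp hg, fun y hy => hga _ (Finset.mem_image_of_mem _ hy), fun y hy hya => ?_⟩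
  have h1 := hfi y hy (hya.trans_le (A.le_of1 h))
  have h2 := hgi _ (Finset.mem_image_of_mem f hy) (by rw [h1]; exact hya)
  exact h2.trans h1

lemma trans2 (A : Ax le1 le2) {a b c : Ordinal} (h : le2 a b) (h' : le2 b c) : le2 a c := by
  refine (A.ch2 a c).2 ⟨(A.le_of2 h).trans (A.le_of2 h'), fun Y m hY => ?_⟩
  obtain ⟨f, hfb, hfi, hf⟩ := A.c2 h' Y m hY
  obtain ⟨f2, hfb2, hfi2, hf2⟩ := A.c2 h (Y.image f) m (by
    intro y hy
    obtain ⟨z, hz, rfl⟩ := Finset.mem_image.1 hy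
    exact hfb z hz)
  refine ⟨fun y => f2 (f y), fun y hy => hfb2 _ (Finset.mem_image_of_mem _ hy),
    fun y hy hya => ?_, fun Z hZ hm => ?_⟩
  · have h1 := hfi y hy (hya.trans_le (A.le_of2 h))
    have h2 := hfi2 _ (Finset.mem_image_of_mem f hy) (by rw [h1]; exact hya)
    exact h2.trans h1
  · obtain ⟨g2, hg2, hgZ2, hgf2⟩ := hf2 Z hZ hm
    obtain ⟨g, hg, hgZ, hgf⟩ := hf (Z.image g2) (by
      intro y hy
      obtain ⟨z, hz, rfl⟩ := Finset.mem_image.1 hy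
      exact hgZ2 z hz) (Finset.card_image_le.trans hm)
    refine ⟨fun x => g (g2 x), IsoOn.comp (hg2.mono ?_) (hg.mono ?_), ?_, ?_⟩
    · rw [Finset.image_image]; rfl
    · intro s hs
      obtain ⟨z, hz, rfl⟩ := Finset.mem_image.1 hs
      rcases Finset.mem_union.1 hz with hz | hz
      · exact Finset.mem_union_left _ (Finset.mem_image_of_mem _ hz)
      · obtain ⟨y, hy, rfl⟩ := Finset.mem_image.1 hz
        rw [hgf2 _ (Finset.mem_image_of_mem _ hy)]
        exact Finset.mem_union_right _ (Finset.mem_image_of_mem _ hy)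
    · intro z hz; exact hgZ _ (Finset.mem_image_of_mem _ hz)
    · intro y hy
      dsimp only
      rw [hgf2 _ (Finset.mem_image_of_mem _ hy), hgf y hy]

lemma down1 (A : Ax le1 le2) {a b c : Ordinal} (hab : a ≤ b) (hbc : b ≤ c) (h : le1 a c) :
    le1 a b :=
  (A.ch1 a b).2 ⟨hab, fun Y hY => A.c1 h Y fun y hy => (hY y hy).trans_le hbc⟩

lemma down2 (A : Ax le1 le2) {a b c : Ordinal} (hab : a ≤ b) (hbc : le1 b c) (h : le2 a c) :
    le2 a b := by
  refine (A.ch2 a b).2 ⟨hab, fun Y m hY => ?_⟩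
  obtain ⟨f, hfa, hfi, hf⟩ := A.c2 h Y m fun y hy => (hY y hy).trans_le (A.le_of1 hbc)
  refine ⟨f, hfa, hfi, fun Z hZ hm => ?_⟩
  obtain ⟨g, hg, hgZ, hgf⟩ := hf Z hZ hm
  obtain ⟨k, hk, hkb, hki⟩ := A.c1 hbc (Z.image g ∪ Y) (by
    intro y hy
    rcases Finset.mem_union.1 hy with hy | hy
    · obtain ⟨z, hz, rfl⟩ := Finset.mem_image.1 hy
      exact hgZ z hz
    · exact (hY y hy).trans_le (A.le_of1 hbc))
  refine ⟨fun x => k (g x), hg.comp (hk.mono ?_), ?_, ?_⟩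
  · intro s hs
    obtain ⟨z, hz, rfl⟩ := Finset.mem_image.1 hs
    rcases Finset.mem_union.1 hz with hz | hz
    · exact Finset.mem_union_left _ (Finset.mem_image_of_mem _ hz)
    · obtain ⟨y, hy, rfl⟩ := Finset.mem_image.1 hz
      rw [hgf y hy]
      exact Finset.mem_union_right _ hy
  · intro z hz; exact hkb _ (Finset.mem_union_left _ (Finset.mem_image_of_mem _ hz))
  · intro y hy
    dsimp only
    rw [hgf y hy]
    exact hki y (Finset.mem_union_right _ hy) (hY y hy)

lemma sup1 (A : Ax le1 le2) {a c : Ordinal} (hac : a ≤ c)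
    (h : ∀ w < c, ∃ w' < c, w < w' ∧ le1 a w') : le1 a c := by
  rcases eq_or_ne c 0 with rfl | hc
  · have : a = 0 := by simpa using hac
    subst this; exact A.refl1 _
  refine (A.ch1 a c).2 ⟨hac, fun Y hY => ?_⟩
  obtain ⟨w, _, h2, h3⟩ := fin_bd (pos_iff_ne_zero.2 hc) h Y hY
  exact A.c1 h2 Y h3

lemma sup2 (A : Ax le1 le2) {a c : Ordinal} (hac : a ≤ c)
    (h : ∀ w < c, ∃ w' < c, w < w' ∧ le2 a w') : le2 a c := by
  rcases eq_or_ne c 0 with rfl | hc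
  · have : a = 0 := by simpa using hac
    subst this; exact A.refl2 _
  refine (A.ch2 a c).2 ⟨hac, fun Y m hY => ?_⟩
  obtain ⟨w, hw, h2, h3⟩ := fin_bd (pos_iff_ne_zero.2 hc) h Y hY
  obtain ⟨f, hfa, hfi, hf⟩ := A.c2 h2 Y m h3
  refine ⟨f, hfa, hfi, fun Z hZ hm => ?_⟩
  obtain ⟨g, hg, hgZ, hgf⟩ := hf Z hZ hm
  exact ⟨g, hg, fun z hz => (hgZ z hz).trans hw, hgf⟩

lemma sup1' (A : Ax le1 le2) {s c : Ordinal} (hs : 0 < s) (hac : s ≤ c)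
    (h : ∀ w < s, ∃ p < s, w < p ∧ le1 p c) : le1 s c := by
  refine (A.ch1 s c).2 ⟨hac, fun Y hY => ?_⟩
  obtain ⟨p, hp, h2, h3⟩ := fin_bd hs h (Y.filter (· < s)) (fun y hy => (Finset.mem_filter.1 hy).2)
  obtain ⟨f, hf, hfp, hfi⟩ := A.c1 h2 Y hY
  exact ⟨f, hf, fun y hy => (hfp y hy).trans hp,
    fun y hy hys => hfi y hy (h3 y (Finset.mem_filter.2 ⟨hy, hys⟩))⟩

lemma lim1 (A : Ax le1 le2) {a c : Ordinal} (hac : a < c) (h : le1 a c) :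
    0 < a ∧ ∀ w < a, ∃ w' < a, w < w' := by
  constructor
  · obtain ⟨f, _, hf, _⟩ := A.c1 h {a} (by simpa using hac)
    exact (zero_le).trans_lt (hf a (by simp))
  · intro w hw
    obtain ⟨f, hf, hfa, hfi⟩ := A.c1 h {w, a} (by simp [hac, hw.trans hac])
    refine ⟨f a, hfa a (by simp), ?_⟩
    have := (hf.lt (u := w) (v := a) (by simp) (by simp)).1 hw
    rwa [hfi w (by simp) hw] at this

lemma lim2 (A : Ax le1 le2) {a c : Ordinal} (hac : a < c) (h : le2 a c) :
    ∀ w < c, ∃ w' < c, w < w' := by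
  intro w hw
  obtain ⟨f, hfa, hfi, hf⟩ := A.c2 h {w} 1 (by simpa using hw)
  obtain ⟨z, hz, hwz⟩ := (A.lim1 hac (A.le21 h)).2 (f w) (hfa w (by simp))
  obtain ⟨g, hg, hgZ, hgf⟩ := hf {z} (by simpa using hz) (by simp)
  refine ⟨g z, hgZ z (by simp), ?_⟩
  have := (hg.lt (u := f w) (v := z) (by simp) (by simp)).1 hwz
  rwa [hgf w (by simp)] at this

lemma lemE (A : Ax le1 le2) {a b : Ordinal} (hab : a < b) (h : le2 a b) :
    ∀ c < a, ∃ d < a, c < d ∧ le1 d a := by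
  intro c hc
  obtain ⟨f, hfa, hfi, hf⟩ := A.c2 h {c, a} 1 (by simp [hab, hc.trans hab])
  have hda := hfa a (by simp)
  refine ⟨f a, hda, ?_, ?_⟩
  · obtain ⟨g, hg, _, hgf⟩ := hf ∅ (by simp) (by simp)
    have := ((C2.iso hg hgf).lt (u := c) (v := a) (by simp) (by simp)).1 hc
    rwa [hfi c (by simp) hc] at this
  · refine A.sup1 hda.le fun w hw => ?_
    obtain ⟨z, hz, hwz⟩ := (A.lim1 hab (A.le21 h)).2 (max w (f a)) (max_lt hw hda)
    refine ⟨z, hz, (le_max_left _ _).trans_lt hwz, ?_⟩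
    obtain ⟨g, hg, hgZ, hgf⟩ := hf {z} (by simpa using hz) (by simp)
    have h1 := hg (f a) (by simp) z (by simp)
    rw [hgf a (by simp)] at h1
    refine h1.2.1.2 (A.down1 (h1.1.1 ((le_max_right _ _).trans hwz.le)) (hgZ z (by simp)).le
      (A.le21 h))

end Ax

structure Block (le1 le2 : Ordinal → Ordinal → Prop) (L : Finset Ordinal) (q η a : Ordinal) :
    Prop where
  hq : q ≤ η
  ha : η < a
  hL : ∀ x ∈ L, x < q
  B1 : ∀ v ≤ η, ∀ w, η < w → w < a → (le1 v w ↔ le1 v q)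
  B2 : ∀ v ≤ η, ∀ w, η < w → w < a → le2 v w → v ∈ L

lemma Block.mono {L : Finset Ordinal} {q η a b : Ordinal} (B : Block le1 le2 L q η a)
    (h : η < b) (h' : b ≤ a) : Block le1 le2 L q η b :=
  ⟨B.hq, h, B.hL, fun v hv w hw hw' => B.B1 v hv w hw (hw'.trans_le h'),
    fun v hv w hw hw' => B.B2 v hv w hw (hw'.trans_le h')⟩

/-- isomorphism preserving labels -/
def IsoL (le1 le2 : Ordinal → Ordinal → Prop) (L S : Finset Ordinal) (f : Ordinal → Ordinal) :
    Prop :=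
  IsoOn le1 le2 S f ∧ ∀ x ∈ L, ∀ w ∈ S, (le2 x w ↔ le2 x (f w))

lemma IsoL.comp {L S : Finset Ordinal} {f g : Ordinal → Ordinal} (h : IsoL le1 le2 L S f)
    (h' : IsoL le1 le2 L (S.image f) g) : IsoL le1 le2 L S (fun x => g (f x)) :=
  ⟨h.1.comp h'.1, fun x hx w hw => (h.2 x hx w hw).trans
    (h'.2 x hx _ (Finset.mem_image_of_mem _ hw))⟩

lemma IsoL.mono {L S T : Finset Ordinal} {f : Ordinal → Ordinal} (h : IsoL le1 le2 L T f)
    (hs : S ⊆ T) : IsoL le1 le2 L S f :=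
  ⟨h.1.mono hs, fun x hx w hw => h.2 x hx w (hs hw)⟩

lemma IsoOn.toL {L S T : Finset Ordinal} {f : Ordinal → Ordinal} (h : IsoOn le1 le2 T f)
    (hL : L ⊆ T) (hS : S ⊆ T) (hf : ∀ x ∈ L, f x = x) : IsoL le1 le2 L S f := by
  refine ⟨h.mono hS, fun x hx w hw => ?_⟩
  have := (h x (hL hx) w (hS hw)).2.2
  rwa [hf x hx] at this

noncomputable def pw (η : Ordinal) (f0 f1 : Ordinal → Ordinal) (y : Ordinal) : Ordinal :=
  if y ≤ η then f0 y else f1 y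

lemma pw_le {η y : Ordinal} (f0 f1 : Ordinal → Ordinal) (h : y ≤ η) : pw η f0 f1 y = f0 y :=
  if_pos h

lemma pw_gt {η y : Ordinal} (f0 f1 : Ordinal → Ordinal) (h : η < y) : pw η f0 f1 y = f1 y :=
  if_neg (not_le.2 h)

lemma Ax.glue (A : Ax le1 le2) {L : Finset Ordinal} {q η a q' η' a' : Ordinal}
    (B : Block le1 le2 L q η a) (B' : Block le1 le2 L q' η' a')
    {Y0 Y1 : Finset Ordinal} {f0 f1 : Ordinal → Ordinal} (hq : q ∈ Y0) (hL : L ⊆ Y0)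
    (h0 : IsoOn le1 le2 Y0 f0) (h0η : ∀ y ∈ Y0, y ≤ η) (h0η' : ∀ y ∈ Y0, f0 y ≤ η')
    (fq : f0 q = q') (fL : ∀ x ∈ L, f0 x = x) (h1 : IsoL le1 le2 L Y1 f1)
    (h1η : ∀ y ∈ Y1, η < y ∧ y < a) (h1η' : ∀ y ∈ Y1, η' < f1 y ∧ f1 y < a') :
    IsoOn le1 le2 (Y0 ∪ Y1) (pw η f0 f1) := by
  have mixed : ∀ v ∈ Y0, ∀ w ∈ Y1, (le1 v w ↔ le1 (f0 v) (f1 w)) ∧ (le2 v w ↔ le2 (f0 v) (f1 w)) := by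
    intro v hv w hw
    obtain ⟨a1, a2⟩ := h1η w hw
    obtain ⟨b1, b2⟩ := h1η' w hw
    constructor
    · rw [B.B1 v (h0η v hv) w a1 a2, B'.B1 _ (h0η' v hv) _ b1 b2, ← fq]
      exact (h0 v hv q hq).2.1
    · constructor
      · intro h
        have hv' := B.B2 v (h0η v hv) w a1 a2 h
        rw [fL v hv']
        exact (h1.2 v hv' w hw).1 h
      · intro h
        have hv' := B'.B2 _ (h0η' v hv) _ b1 b2 h
        have e : v = f0 v := h0.inj hv (hL hv') (fL _ hv').symm
        have hvL : v ∈ L := by rw [e]; exact hv'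
        rw [fL v hvL] at h
        exact (h1.2 v hvL w hw).2 h
  intro u hu v hv
  rcases Finset.mem_union.1 hu with hu | hu <;> rcases Finset.mem_union.1 hv with hv | hv
  · rw [pw_le _ _ (h0η u hu), pw_le _ _ (h0η v hv)]
    exact h0 u hu v hv
  · rw [pw_le _ _ (h0η u hu), pw_gt _ _ (h1η v hv).1]
    refine ⟨?_, mixed u hu v hv⟩
    exact iff_of_true ((h0η u hu).trans (h1η v hv).1.le) ((h0η' u hu).trans (h1η' v hv).1.le)
  · rw [pw_le _ _ (h0η v hv), pw_gt _ _ (h1η u hu).1]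
    have e1 : ¬ u ≤ v := not_le.2 ((h0η v hv).trans_lt (h1η u hu).1)
    have e2 : ¬ f1 u ≤ f0 v := not_le.2 ((h0η' v hv).trans_lt (h1η' u hu).1)
    exact ⟨iff_of_false e1 e2,
      iff_of_false (fun h => e1 (A.le_of1 h)) (fun h => e2 (A.le_of1 h)),
      iff_of_false (fun h => e1 (A.le_of2 h)) (fun h => e2 (A.le_of2 h))⟩
  · rw [pw_gt _ _ (h1η v hv).1, pw_gt _ _ (h1η u hu).1]
    exact h1.1 u hu v hv

end PartB

section PartC

variable {le1 le2 : Ordinal → Ordinal → Prop}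

noncomputable def sh (η η' y : Ordinal) : Ordinal := η' + (y - η)

lemma sh_add (η η' ξ : Ordinal) : sh η η' (η + ξ) = η' + ξ := by
  unfold sh; rw [Ordinal.add_sub_cancel]

lemma sh_gt {η y : Ordinal} (η' : Ordinal) (h : η < y) : η' < sh η η' y := by
  unfold sh
  have : 0 < y - η := by rw [Ordinal.lt_sub]; simpa using h
  simpa using this

lemma sh_lt {η y ζ : Ordinal} (η' : Ordinal) (h : η ≤ y) (h2 : y < η + ζ) :
    sh η η' y < η' + ζ := by
  unfold sh
  have : y - η < ζ := by
    rw [← Ordinal.add_sub_cancel_of_le h] at h2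
    simpa using h2
  simpa using this

lemma sh_sh {η y : Ordinal} (η' : Ordinal) (h : η ≤ y) : sh η' η (sh η η' y) = y := by
  unfold sh
  rw [Ordinal.add_sub_cancel, Ordinal.add_sub_cancel_of_le h]

lemma exists_add {η y ζ : Ordinal} (h : η < y) (h2 : y < η + ζ) :
    ∃ ξ, 0 < ξ ∧ ξ < ζ ∧ y = η + ξ := by
  have e := Ordinal.add_sub_cancel_of_le h.le
  refine ⟨y - η, ?_, ?_, e.symm⟩
  · rw [Ordinal.lt_sub]; simpa using h
  · rw [← e] at h2
    simpa using h2

def TrAt (le1 le2 : Ordinal → Ordinal → Prop) (L : Finset Ordinal) (η η' ζ : Ordinal) : Prop :=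
  (∀ ξ, 0 < ξ → ξ < ζ → (le1 (η + ξ) (η + ζ) ↔ le1 (η' + ξ) (η' + ζ)) ∧
    (le2 (η + ξ) (η + ζ) ↔ le2 (η' + ξ) (η' + ζ))) ∧
  ∀ x ∈ L, (le2 x (η + ζ) ↔ le2 x (η' + ζ))

def Tr (le1 le2 : Ordinal → Ordinal → Prop) (L : Finset Ordinal) (η η' ζ : Ordinal) : Prop :=
  ∀ ξ, 0 < ξ → ξ < ζ → TrAt le1 le2 L η η' ξ

lemma TrAt.symm {L : Finset Ordinal} {η η' ζ : Ordinal} (h : TrAt le1 le2 L η η' ζ) :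
    TrAt le1 le2 L η' η ζ :=
  ⟨fun ξ h1 h2 => ⟨(h.1 ξ h1 h2).1.symm, (h.1 ξ h1 h2).2.symm⟩, fun x hx => (h.2 x hx).symm⟩

lemma Tr.symm {L : Finset Ordinal} {η η' ζ : Ordinal} (h : Tr le1 le2 L η η' ζ) :
    Tr le1 le2 L η' η ζ := fun ξ h1 h2 => (h ξ h1 h2).symm

lemma Ax.trPair (A : Ax le1 le2) {L : Finset Ordinal} {η η' ζ : Ordinal}
    (h : Tr le1 le2 L η η' ζ) {s t : Ordinal} (hs : 0 < s) (hs' : s < ζ) (ht : 0 < t)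
    (ht' : t < ζ) : (η + s ≤ η + t ↔ η' + s ≤ η' + t) ∧
      (le1 (η + s) (η + t) ↔ le1 (η' + s) (η' + t)) ∧
      (le2 (η + s) (η + t) ↔ le2 (η' + s) (η' + t)) := by
  refine ⟨by simp, ?_⟩
  rcases lt_trichotomy s t with e | e | e
  · exact (h t ht ht').1 s hs e
  · subst e
    exact ⟨iff_of_true (A.refl1 _) (A.refl1 _), iff_of_true (A.refl2 _) (A.refl2 _)⟩
  · have e1 : ¬ η + s ≤ η + t := by simpa using e
    have e2 : ¬ η' + s ≤ η' + t := by simpa using e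
    exact ⟨iff_of_false (fun h => e1 (A.le_of1 h)) (fun h => e2 (A.le_of1 h)),
      iff_of_false (fun h => e1 (A.le_of2 h)) (fun h => e2 (A.le_of2 h))⟩

lemma Ax.trIso (A : Ax le1 le2) {L : Finset Ordinal} {η η' ζ : Ordinal}
    (h : Tr le1 le2 L η η' ζ) {S : Finset Ordinal} (hS : ∀ s ∈ S, η < s ∧ s < η + ζ) :
    IsoL le1 le2 L S (sh η η') := by
  constructor
  · intro u hu v hv
    obtain ⟨s, s1, s2, rfl⟩ := exists_add (hS u hu).1 (hS u hu).2
    obtain ⟨t, t1, t2, rfl⟩ := exists_add (hS v hv).1 (hS v hv).2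
    rw [sh_add, sh_add]
    exact A.trPair h s1 s2 t1 t2
  · intro x hx w hw
    obtain ⟨t, t1, t2, rfl⟩ := exists_add (hS w hw).1 (hS w hw).2
    rw [sh_add]
    exact (h t t1 t2).2 x hx

lemma Tr.shift {L L' : Finset Ordinal} {η η' ζ ε : Ordinal} (hL : L' ⊆ L)
    (h : Tr le1 le2 L η η' (ε + ζ)) : Tr le1 le2 L' (η + ε) (η' + ε) ζ := by
  intro ξ h1 h2
  have h3 := h (ε + ξ) (h1.trans_le le_add_self) (by simpa using h2)
  constructor
  · intro t t1 t2
    have := h3.1 (ε + t) (t1.trans_le le_add_self) (by simpa using t2)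
    simpa only [add_assoc] using this
  · intro x hx
    have := h3.2 x (hL hx)
    simpa only [add_assoc] using this

/-- conjugation of a map by two translations -/
lemma Ax.conj (A : Ax le1 le2) {L : Finset Ordinal} {η η' ζ θ θ' ζ' : Ordinal}
    (h : Tr le1 le2 L η η' ζ) (h' : Tr le1 le2 L θ θ' ζ') {S : Finset Ordinal}
    (hS : ∀ s ∈ S, η' < s ∧ s < η' + ζ) {f : Ordinal → Ordinal}
    (hf : IsoL le1 le2 L (S.image (sh η' η)) f)
    (hf' : ∀ s ∈ S, θ < f (sh η' η s) ∧ f (sh η' η s) < θ + ζ') :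
    IsoL le1 le2 L S (fun y => sh θ θ' (f (sh η' η y))) := by
  have h1 : IsoL le1 le2 L S (sh η' η) := A.trIso h.symm hS
  have h2 := h1.comp hf
  refine h2.comp (A.trIso h' ?_)
  intro s hs
  obtain ⟨y, hy, rfl⟩ := Finset.mem_image.1 hs
  exact hf' y hy

lemma Ax.step1 (A : Ax le1 le2) {L : Finset Ordinal} {q' η η' ζ ξ : Ordinal}
    (hL : ∀ x ∈ L, x ≤ η) (B' : Block le1 le2 L q' η' (η' + ζ)) (T : Tr le1 le2 L η η' ζ)
    (h0 : 0 < ξ) (h1 : ξ < ζ) (h : le1 (η + ξ) (η + ζ)) : le1 (η' + ξ) (η' + ζ) := by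
  classical
  refine (A.ch1 _ _).2 ⟨by simpa using h1.le, fun Y hY => ?_⟩
  have hηξ : η < η + ξ := by simpa using h0
  set Y1 := Y.filter (η' < ·) with hY1
  have hY1' : ∀ s ∈ Y1, η' < s ∧ s < η' + ζ := fun s hs =>
    ⟨(Finset.mem_filter.1 hs).2, hY s (Finset.mem_filter.1 hs).1⟩
  have hη : η < η + ζ := hηξ.trans (by simpa using h1)
  obtain ⟨f, hf, hfa, hfi⟩ := A.c1 h (L ∪ {η} ∪ Y1.image (sh η' η)) (by
    intro y hy
    simp only [Finset.mem_union, Finset.mem_singleton, Finset.mem_image] at hy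
    rcases hy with (hy | rfl) | ⟨z, hz, rfl⟩
    · exact (hL y hy).trans_lt hη
    · exact hη
    · exact sh_lt _ (hY1' z hz).1.le (hY1' z hz).2)
  have fη : f η = η := hfi η (by simp) hηξ
  have fL : ∀ x ∈ L, f x = x := fun x hx => hfi x (by simp [hx]) ((hL x hx).trans_lt hηξ)
  have hmem : ∀ s ∈ Y1, sh η' η s ∈ L ∪ {η} ∪ Y1.image (sh η' η) := fun s hs =>
    Finset.mem_union_right _ (Finset.mem_image_of_mem _ hs)
  have hgt : ∀ s ∈ Y1, η < f (sh η' η s) := by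
    intro s hs
    have := (hf.lt (u := η) (v := sh η' η s) (by simp) (hmem s hs)).1 (sh_gt _ (hY1' s hs).1)
    rwa [fη] at this
  have hltξ : ∀ s ∈ Y1, f (sh η' η s) < η + ξ := fun s hs => hfa _ (hmem s hs)
  have hlt : ∀ s ∈ Y1, f (sh η' η s) < η + ζ := fun s hs =>
    (hltξ s hs).trans (by simpa using h1)
  have hc := A.conj T T hY1' (f := f) (hf.toL (by intro x hx; simp [hx])
    (by intro x hx; exact Finset.mem_union_right _ hx) fL) (fun s hs => ⟨hgt s hs, hlt s hs⟩)
  have hG := A.glue B' B' (Y0 := Y.filter (· ≤ η') ∪ L ∪ {q'}) (Y1 := Y1) (f0 := fun x => x)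
    (by simp) (by intro x hx; simp [hx]) (IsoOn.id _) (by
      intro y hy
      simp only [Finset.mem_union, Finset.mem_singleton, Finset.mem_filter] at hy
      rcases hy with (hy | hy) | rfl
      · exact hy.2
      · exact (B'.hL y hy).le.trans B'.hq
      · exact B'.hq) (by
      intro y hy
      simp only [Finset.mem_union, Finset.mem_singleton, Finset.mem_filter] at hy
      rcases hy with (hy | hy) | rfl
      · exact hy.2
      · exact (B'.hL y hy).le.trans B'.hq
      · exact B'.hq) rfl (fun _ _ => rfl) hc hY1'
      (fun s hs => ⟨sh_gt _ (hgt s hs), sh_lt _ (hgt s hs).le (hlt s hs)⟩)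
  refine ⟨_, hG.mono ?_, ?_, ?_⟩
  · intro y hy
    by_cases hy' : y ≤ η'
    · simp [hy, hy']
    · simp [hY1, hy, not_le.1 hy']
  · intro y hy
    by_cases hy' : y ≤ η'
    · rw [pw_le _ _ hy']
      exact hy'.trans_lt (by simpa using h0)
    · have hy1 : y ∈ Y1 := Finset.mem_filter.2 ⟨hy, not_le.1 hy'⟩
      rw [pw_gt _ _ (not_le.1 hy')]
      exact sh_lt _ (hgt y hy1).le (hltξ y hy1)
  · intro y hy hya
    by_cases hy' : y ≤ η'
    · rw [pw_le _ _ hy']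
    · have hy1 : y ∈ Y1 := Finset.mem_filter.2 ⟨hy, not_le.1 hy'⟩
      rw [pw_gt _ _ (not_le.1 hy')]
      rw [hfi _ (hmem y hy1) (sh_lt _ (not_le.1 hy').le hya), sh_sh _ (not_le.1 hy').le]

lemma Ax.step2 (A : Ax le1 le2) {L : Finset Ordinal} {q' η η' ζ ξ : Ordinal}
    (hL : ∀ x ∈ L, x ≤ η) (B' : Block le1 le2 L q' η' (η' + ζ)) (T : Tr le1 le2 L η η' ζ)
    (h0 : 0 < ξ) (h1 : ξ < ζ) (h : le2 (η + ξ) (η + ζ)) : le2 (η' + ξ) (η' + ζ) := by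
  classical
  refine (A.ch2 _ _).2 ⟨by simpa using h1.le, fun Y m hY => ?_⟩
  have hηξ : η < η + ξ := by simpa using h0
  have hηξ' : η' < η' + ξ := by simpa using h0
  have hξζ' : η' + ξ < η' + ζ := by simpa using h1
  set Y1 := Y.filter (η' < ·) with hY1
  have hY1' : ∀ s ∈ Y1, η' < s ∧ s < η' + ζ := fun s hs =>
    ⟨(Finset.mem_filter.1 hs).2, hY s (Finset.mem_filter.1 hs).1⟩
  have hη : η < η + ζ := hηξ.trans (by simpa using h1)
  set YY := L ∪ {η} ∪ Y1.image (sh η' η) with hYY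
  obtain ⟨f, hfa, hfi, hfZ⟩ := A.c2 h YY m (by
    intro y hy
    simp only [hYY, Finset.mem_union, Finset.mem_singleton, Finset.mem_image] at hy
    rcases hy with (hy | rfl) | ⟨z, hz, rfl⟩
    · exact (hL y hy).trans_lt hη
    · exact hη
    · exact sh_lt _ (hY1' z hz).1.le (hY1' z hz).2)
  have hηYY : η ∈ YY := by simp [hYY]
  have hLYY : L ⊆ YY := by intro x hx; simp [hYY, hx]
  have hf : IsoOn le1 le2 YY f := by
    obtain ⟨g, hg, _, hgf⟩ := hfZ ∅ (by simp) (by simp)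
    exact C2.iso hg hgf
  have fη : f η = η := hfi η hηYY hηξ
  have fL : ∀ x ∈ L, f x = x := fun x hx => hfi x (hLYY hx) ((hL x hx).trans_lt hηξ)
  have hmem : ∀ s ∈ Y1, sh η' η s ∈ YY := fun s hs =>
    Finset.mem_union_right _ (Finset.mem_image_of_mem _ hs)
  have hgt : ∀ s ∈ Y1, η < f (sh η' η s) := by
    intro s hs
    have := (hf.lt hηYY (hmem s hs)).1 (sh_gt _ (hY1' s hs).1)
    rwa [fη] at this
  have hltξ : ∀ s ∈ Y1, f (sh η' η s) < η + ξ := fun s hs => hfa _ (hmem s hs)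
  refine ⟨pw η' (fun x => x) (fun y => sh η η' (f (sh η' η y))), ?_, ?_, ?_⟩
  · intro y hy
    by_cases hy' : y ≤ η'
    · rw [pw_le _ _ hy']
      exact hy'.trans_lt (by simpa using h0)
    · have hy1 : y ∈ Y1 := Finset.mem_filter.2 ⟨hy, not_le.1 hy'⟩
      rw [pw_gt _ _ (not_le.1 hy')]
      exact sh_lt _ (hgt y hy1).le (hltξ y hy1)
  · intro y hy hya
    by_cases hy' : y ≤ η'
    · rw [pw_le _ _ hy']
    · have hy1 : y ∈ Y1 := Finset.mem_filter.2 ⟨hy, not_le.1 hy'⟩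
      rw [pw_gt _ _ (not_le.1 hy')]
      rw [hfi _ (hmem y hy1) (sh_lt _ (not_le.1 hy').le hya), sh_sh _ (not_le.1 hy').le]
  · intro Z hZ hm
    set Z1 := Z.filter (η' < ·) with hZ1
    have hZ1' : ∀ s ∈ Z1, η' < s ∧ s < η' + ξ := fun s hs =>
      ⟨(Finset.mem_filter.1 hs).2, hZ s (Finset.mem_filter.1 hs).1⟩
    obtain ⟨g, hg, hgZ, hgf⟩ := hfZ (Z1.image (sh η' η)) (by
      intro y hy
      obtain ⟨z, hz, rfl⟩ := Finset.mem_image.1 hy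
      exact sh_lt _ (hZ1' z hz).1.le (hZ1' z hz).2)
      (Finset.card_image_le.trans ((Finset.card_filter_le _ _).trans hm))
    have hfm : ∀ y ∈ YY, f y ∈ Z1.image (sh η' η) ∪ YY.image f := fun y hy =>
      Finset.mem_union_right _ (Finset.mem_image_of_mem _ hy)
    have hηm : η ∈ Z1.image (sh η' η) ∪ YY.image f := by
      have := hfm η hηYY; rwa [fη] at this
    have hLm : ∀ x ∈ L, x ∈ Z1.image (sh η' η) ∪ YY.image f := by
      intro x hx
      have := hfm x (hLYY hx); rwa [fL x hx] at this
    have gη : g η = η := by have := hgf η hηYY; rwa [fη] at this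
    have gL : ∀ x ∈ L, g x = x := by
      intro x hx
      have := hgf x (hLYY hx); rwa [fL x hx] at this
    set W := Z1 ∪ Y1.image (fun y => sh η η' (f (sh η' η y))) with hW
    have hW' : ∀ s ∈ W, η' < s ∧ s < η' + ξ ∧
        sh η' η s ∈ Z1.image (sh η' η) ∪ YY.image f ∧ g (sh η' η s) < η + ζ := by
      intro s hs
      rcases Finset.mem_union.1 hs with hs | hs
      · have := Finset.mem_image_of_mem (sh η' η) hs
        exact ⟨(hZ1' s hs).1, (hZ1' s hs).2, Finset.mem_union_left _ this, hgZ _ this⟩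
      · obtain ⟨y, hy, rfl⟩ := Finset.mem_image.1 hs
        refine ⟨sh_gt _ (hgt y hy), sh_lt _ (hgt y hy).le (hltξ y hy), ?_⟩
        rw [sh_sh _ (hgt y hy).le]
        refine ⟨hfm _ (hmem y hy), ?_⟩
        rw [hgf _ (hmem y hy)]
        exact sh_lt _ (hY1' y hy).1.le (hY1' y hy).2
    have hgW : ∀ s ∈ W, η < g (sh η' η s) := by
      intro s hs
      have := (hg.lt hηm (hW' s hs).2.2.1).1 (sh_gt _ (hW' s hs).1)
      rwa [gη] at this
    have hc := A.conj T T (S := W) (fun s hs => ⟨(hW' s hs).1, (hW' s hs).2.1.trans hξζ'⟩) (f := g)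
      (hg.toL hLm (by
        intro x hx
        obtain ⟨s, hs, rfl⟩ := Finset.mem_image.1 hx
        exact (hW' s hs).2.2.1) gL) (fun s hs => ⟨hgW s hs, (hW' s hs).2.2.2⟩)
    have hY0 : ∀ y ∈ (Z ∪ Y).filter (· ≤ η') ∪ L ∪ {q'}, y ≤ η' := by
      intro y hy
      simp only [Finset.mem_union, Finset.mem_singleton, Finset.mem_filter] at hy
      rcases hy with (hy | hy) | rfl
      · exact hy.2
      · exact (B'.hL y hy).le.trans B'.hq
      · exact B'.hq
    have hG := A.glue B' B' (Y0 := (Z ∪ Y).filter (· ≤ η') ∪ L ∪ {q'}) (Y1 := W)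
      (f0 := fun x => x)
      (by simp) (by intro x hx; simp [hx]) (IsoOn.id _) hY0 hY0 rfl (fun _ _ => rfl) hc
      (fun s hs => ⟨(hW' s hs).1, (hW' s hs).2.1.trans hξζ'⟩)
      (fun s hs => ⟨sh_gt _ (hgW s hs), sh_lt _ (hgW s hs).le (hW' s hs).2.2.2⟩)
    refine ⟨_, hG.mono ?_, ?_, ?_⟩
    · intro s hs
      rcases Finset.mem_union.1 hs with hs | hs
      · by_cases hy' : s ≤ η'
        · simp [hs, hy']
        · simp [hW, hZ1, hs, not_le.1 hy']
      · obtain ⟨y, hy, rfl⟩ := Finset.mem_image.1 hs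
        by_cases hy' : y ≤ η'
        · rw [pw_le _ _ hy']; simp [hy, hy']
        · rw [pw_gt _ _ (not_le.1 hy')]
          have hy1 : y ∈ Y1 := Finset.mem_filter.2 ⟨hy, not_le.1 hy'⟩
          exact Finset.mem_union_right _ (Finset.mem_union_right _
            (Finset.mem_image_of_mem (fun y => sh η η' (f (sh η' η y))) hy1))
    · intro z hz
      by_cases hy' : z ≤ η'
      · rw [pw_le _ _ hy']
        exact hy'.trans_lt B'.ha
      · have hz1 : z ∈ W := Finset.mem_union_left _ (Finset.mem_filter.2 ⟨hz, not_le.1 hy'⟩)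
        rw [pw_gt _ _ (not_le.1 hy')]
        exact sh_lt _ (hgW z hz1).le (hW' z hz1).2.2.2
    · intro y hy
      by_cases hy' : y ≤ η'
      · rw [pw_le _ _ hy', pw_le _ _ hy']
      · have hy1 : y ∈ Y1 := Finset.mem_filter.2 ⟨hy, not_le.1 hy'⟩
        rw [pw_gt _ _ (not_le.1 hy')]
        rw [pw_gt _ _ (sh_gt _ (hgt y hy1))]
        rw [sh_sh _ (hgt y hy1).le, hgf _ (hmem y hy1), sh_sh _ (not_le.1 hy').le]

end PartC

section PartD

variable {le1 le2 : Ordinal → Ordinal → Prop}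

lemma exists_least {P : Ordinal → Prop} (h : ∃ x, P x) : ∃ x, P x ∧ ∀ y < x, ¬ P y := by
  obtain ⟨x, hx⟩ := h
  induction x using WellFoundedLT.induction with
  | ind x ih =>
    by_cases hy : ∃ y < x, P y
    · obtain ⟨y, hy, hp⟩ := hy
      exact ih y hy hp
    · push Not at hy
      exact ⟨x, hx, hy⟩

lemma Ax.block_refine (A : Ax le1 le2) {L : Finset Ordinal} {q0 η0 c x : Ordinal}
    (B : Block le1 le2 L q0 η0 c) (hx : x ∈ L) (hch : ∀ l ∈ L, ∀ y ∈ L, l < y → le2 l y)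
    (hlim : ∀ w < c, ∃ w' < c, w < w')
    (hnc : ∃ e < c, η0 ≤ e ∧ ∀ w, e < w → w < c → ¬ le2 x w) :
    ∃ q η, (q = q0 ∨ η0 < q ∧ le2 x q) ∧ η0 ≤ η ∧ q ≤ η ∧ le1 q c ∧
      Block le1 le2 (L.filter (· < x)) q η c := by
  have hxη : x < η0 := (B.hL x hx).trans_le B.hq
  -- e0
  obtain ⟨e0, ⟨he0c, hηe, hno⟩, hmin⟩ :=
    exists_least (P := fun e => e < c ∧ η0 ≤ e ∧ ∀ w, e < w → w < c → ¬ le2 x w) hnc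
  have he0 : η0 < e0 → le2 x e0 := by
    intro h
    by_contra hxe
    refine hxe (A.sup2 (hxη.le.trans hηe) fun w hw => ?_)
    have hw2 : max w η0 < e0 := max_lt hw h
    by_contra hcon
    push Not at hcon
    refine hmin _ hw2 ⟨hw2.trans he0c, le_max_right _ _, ?_⟩
    intro v hv hvc hxv
    rcases lt_trichotomy v e0 with h1 | h1 | h1
    · exact hcon v h1 ((le_max_left _ _).trans_lt hv) hxv
    · subst h1; exact hxe hxv
    · exact hno v h1 hvc hxv
  have hq0c : le1 q0 c := by
    refine A.sup1 (B.hq.trans B.ha.le) fun w hw => ?_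
    obtain ⟨w', hw', h2⟩ := hlim (max w η0) (max_lt hw B.ha)
    exact ⟨w', hw', (le_max_left _ _).trans_lt h2,
      (B.B1 q0 B.hq w' ((le_max_right _ _).trans_lt h2) hw').2 (A.refl1 _)⟩
  -- k
  obtain ⟨k, ⟨hηk, hnk⟩, hkmin⟩ :=
    exists_least (P := fun k => η0 ≤ k ∧ ∀ v, k < v → v ≤ e0 → ¬ le1 v c)
      ⟨e0, hηe, fun v h1 h2 => absurd h1 (not_lt.2 h2)⟩
  have hke : k ≤ e0 := by
    by_contra h
    exact hkmin e0 (not_le.1 h) ⟨hηe, fun v h1 h2 => absurd h1 (not_lt.2 h2)⟩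
  have hk : η0 < k → le1 k c := by
    intro h
    by_contra hxe
    refine hxe (A.sup1' (zero_le.trans_lt h) (hke.trans he0c.le) fun w hw => ?_)
    have hw2 : max w η0 < k := max_lt hw h
    by_contra hcon
    push Not at hcon
    refine hkmin _ hw2 ⟨le_max_right _ _, ?_⟩
    intro v hv hvc hxv
    rcases lt_trichotomy v k with h1 | h1 | h1
    · exact hcon v h1 ((le_max_left _ _).trans_lt hv) hxv
    · subst h1; exact hxe hxv
    · exact hnk v h1 hvc hxv
  -- q
  obtain ⟨q, hq, hqe, hqc, hqv⟩ : ∃ q, (q = q0 ∨ η0 < q) ∧ q ≤ e0 ∧ le1 q c ∧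
      ∀ v, η0 < v → q < v → v ≤ e0 → ¬ le1 v c := by
    rcases hηk.eq_or_lt with h | h
    · subst h
      exact ⟨q0, Or.inl rfl, B.hq.trans hηe, hq0c, fun v h1 _ h2 => hnk v h1 h2⟩
    · exact ⟨k, Or.inr h, hke, hk h, fun v _ h1 h2 => hnk v h1 h2⟩
  -- η
  obtain ⟨η, heη, hηc, hη⟩ : ∃ η, e0 ≤ η ∧ η < c ∧
      ∀ v ≤ η, η0 < v → q < v → ∀ w, η < w → w < c → ¬ le1 v w := by
    by_cases hne : ∃ v, η0 < v ∧ q < v ∧ v ≤ e0 ∧ le1 v e0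
    · obtain ⟨v0, ⟨hv1, hv2, hv3, hv4⟩, hvmin⟩ := exists_least hne
      obtain ⟨c1, ⟨hc1, hc2⟩, hcmin⟩ := exists_least (P := fun w => e0 ≤ w ∧ ¬ le1 v0 w)
        ⟨c, he0c.le, hqv v0 hv1 hv2 hv3⟩
      have hc1c : c1 ≤ c := by
        by_contra h
        exact hcmin c (not_le.1 h) ⟨he0c.le, hqv v0 hv1 hv2 hv3⟩
      have hec : e0 < c1 := lt_of_le_of_ne hc1 (by rintro rfl; exact hc2 hv4)
      have hv0 : ∀ w, e0 ≤ w → w < c1 → le1 v0 w := by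
        intro w h1 h2
        by_contra h3
        exact hcmin w h2 ⟨h1, h3⟩
      have : ∃ w < c1, ∀ w' < c1, w' ≤ w := by
        by_contra hcon
        push Not at hcon
        refine hc2 (A.sup1 (hv3.trans hc1) fun w hw => ?_)
        obtain ⟨w', h1, h2⟩ := hcon (max w e0) (max_lt hw hec)
        exact ⟨w', h1, (le_max_left _ _).trans_lt h2, hv0 w' ((le_max_right _ _).trans h2.le) h1⟩
      obtain ⟨η, h1, h2⟩ := this
      refine ⟨η, h2 e0 hec, h1.trans_le hc1c, ?_⟩
      intro v hv hv' hqv w hw hwc hvw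
      have hc1w : c1 ≤ w := by
        by_contra h
        exact absurd (h2 w (not_le.1 h)) (not_le.2 hw)
      have h3 : le1 v0 v := by
        rcases le_or_gt v e0 with h | h
        · have hve : le1 v e0 := A.down1 h ((h2 e0 hec).trans hw.le) hvw
          have h4 : v0 ≤ v := by
            by_contra h5
            exact hvmin v (not_le.1 h5) ⟨hv', hqv, h, hve⟩
          exact A.down1 h4 h hv4
        · exact hv0 v h.le (hv.trans_lt h1)
      exact hc2 (A.down1 (hv3.trans hc1) hc1w (A.trans1 h3 hvw))
    · push Not at hne
      refine ⟨e0, le_rfl, he0c, ?_⟩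
      intro v hv hv' hqv w hw hwc hvw
      exact hne v hv' hqv hv (A.down1 hv hw.le hvw)
  have hqη : q ≤ η := hqe.trans heη
  have hxq : x < q := by
    rcases hq with rfl | h
    · exact B.hL x hx
    · exact hxη.trans h
  have hB1 : ∀ v ≤ η, ∀ w, η < w → w < c → (le1 v w ↔ le1 v q) := by
    intro v hv w hw hwc
    constructor
    · intro hvw
      rcases le_or_gt v q with h | h
      · exact A.down1 h (hqη.trans hw.le) hvw
      · rcases le_or_gt v η0 with h2 | h2
        · rcases hq with rfl | h3
          · exact (B.B1 v h2 w ((hηe.trans heη).trans_lt hw) hwc).1 hvw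
          · exact absurd (h2.trans_lt h3) (not_lt.2 h.le)
        · exact absurd hvw (hη v hv h2 h w hw hwc)
    · intro h
      exact A.trans1 h (A.down1 (hqη.trans hw.le) hwc.le hqc)
  have hq' : q = q0 ∨ η0 < q ∧ le2 x q := hq.imp_right fun h =>
    ⟨h, A.down2 hxq.le (A.down1 hqe he0c.le hqc) (he0 (h.trans_le hqe))⟩
  refine ⟨q, η, hq', hηe.trans heη, hqη, hqc, hqη, hηc, ?_, hB1, ?_⟩
  · intro y hy
    exact (Finset.mem_filter.1 hy).2.trans hxq
  · intro v hv w hw hwc hvw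
    have hnx : ¬ le2 x w := hno w (heη.trans_lt hw) hwc
    rcases le_or_gt v η0 with h2 | h2
    · have hvL := B.B2 v h2 w ((hηe.trans heη).trans_lt hw) hwc hvw
      refine Finset.mem_filter.2 ⟨hvL, ?_⟩
      rcases lt_trichotomy v x with h | h | h
      · exact h
      · subst h; exact absurd hvw hnx
      · exact absurd (A.trans2 (hch x hx v hvL h) hvw) hnx
    · exfalso
      have h3 := (hB1 v hv w hw hwc).1 (A.le21 hvw)
      have hvq := A.le_of1 h3
      have hxe := he0 (h2.trans_le (hvq.trans hqe))
      have hxq2 : le2 x q := A.down2 hxq.le (A.down1 hqe he0c.le hqc) hxe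
      have hxv : le2 x v := A.down2 (hxη.trans h2).le h3 hxq2
      exact hnx (A.trans2 hxv hvw)

lemma Ax.block_transfer (A : Ax le1 le2) {L L' : Finset Ordinal} {q0 η0 q0' η0' ζ q ε q' : Ordinal}
    (B : Block le1 le2 L q0 η0 (η0 + ζ)) (B' : Block le1 le2 L q0' η0' (η0' + ζ))
    (T : Tr le1 le2 L η0 η0' ζ) (hL : L' ⊆ L) (hε : ε < ζ)
    (hq : (q = q0 ∧ q' = q0') ∨ ∃ κ, 0 < κ ∧ κ ≤ ε ∧ q = η0 + κ ∧ q' = η0' + κ)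
    (Bq : Block le1 le2 L' q (η0 + ε) (η0 + ζ)) :
    Block le1 le2 L' q' (η0' + ε) (η0' + ζ) := by
  refine ⟨?_, by simpa using hε, ?_, ?_, ?_⟩
  · rcases hq with ⟨-, rfl⟩ | ⟨κ, h1, h2, -, rfl⟩
    · exact B'.hq.trans le_self_add
    · simpa using h2
  · intro y hy
    rcases hq with ⟨-, rfl⟩ | ⟨κ, h1, h2, -, rfl⟩
    · exact B'.hL y (hL hy)
    · exact ((B'.hL y (hL hy)).trans_le B'.hq).trans (by simpa using h1)
  · intro v hv w hw hwc
    obtain ⟨ω, o1, o2, rfl⟩ := exists_add (le_self_add.trans_lt hw) hwc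
    have o3 : ε < ω := by simpa using hw
    have hηw : η0' < η0' + ω := by simpa using o1
    rcases le_or_gt v η0' with h | h
    · rw [B'.B1 v h _ hηw hwc]
      rcases hq with ⟨-, rfl⟩ | ⟨κ, h1, h2, -, rfl⟩
      · rfl
      · exact (B'.B1 v h (η0' + κ) (by simpa using h1) (by simpa using h2.trans_lt hε)).symm
    · obtain ⟨ξ, x1, x2, rfl⟩ := exists_add h (hv.trans_lt (by simpa using hε : η0' + ε < η0' + ζ))
      have x3 : ξ ≤ ε := by simpa using hv
      rw [← (A.trPair T x1 x2 o1 o2).2.1,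
        Bq.B1 (η0 + ξ) (by simpa using x3) (η0 + ω) (by simpa using o3) (by simpa using o2)]
      rcases hq with ⟨rfl, rfl⟩ | ⟨κ, h1, h2, rfl, rfl⟩
      · refine iff_of_false (fun h' => ?_) (fun h' => ?_)
        · exact absurd ((A.le_of1 h').trans B.hq) (not_le.2 (by simpa using x1))
        · exact absurd ((A.le_of1 h').trans B'.hq) (not_le.2 h)
      · exact (A.trPair T x1 x2 h1 (h2.trans_lt hε)).2.1
  · intro v hv w hw hwc hvw
    obtain ⟨ω, o1, o2, rfl⟩ := exists_add (le_self_add.trans_lt hw) hwc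
    have o3 : ε < ω := by simpa using hw
    have hηw : η0' < η0' + ω := by simpa using o1
    rcases le_or_gt v η0' with h | h
    · have hvL := B'.B2 v h _ hηw hwc hvw
      refine Bq.B2 v (((B.hL v hvL).le.trans B.hq).trans le_self_add) (η0 + ω)
        (by simpa using o3) (by simpa using o2) (((T ω o1 o2).2 v hvL).2 hvw)
    · exfalso
      obtain ⟨ξ, x1, x2, rfl⟩ := exists_add h (hv.trans_lt (by simpa using hε : η0' + ε < η0' + ζ))
      have x3 : ξ ≤ ε := by simpa using hv
      have := Bq.B2 (η0 + ξ) (by simpa using x3) (η0 + ω) (by simpa using o3) (by simpa using o2)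
        ((A.trPair T x1 x2 o1 o2).2.2.2 hvw)
      have h2 := (B.hL _ (hL this)).trans_le B.hq
      exact absurd h2 (not_lt.2 le_self_add)

lemma Ax.copy_block (A : Ax le1 le2) {L : Finset Ordinal} {q η d x : Ordinal} (hxd : x < d)
    (h1 : le1 x d)
    (B : Block le1 le2 L q η d) (hqd : le1 q d) (hL : ∀ l ∈ L, l < x)
    {Y : Finset Ordinal} {M : ℕ} (hM : 2 ≤ M) (hqY : q ∈ Y) (hηY : η ∈ Y) (hLY : L ⊆ Y)
    {f : Ordinal → Ordinal} (hfx : ∀ y ∈ Y, f y < x) (hfi : ∀ y ∈ Y, y < x → f y = y)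
    (hfZ : ∀ Z : Finset Ordinal, (∀ z ∈ Z, z < x) → Z.card ≤ M → ∃ g : Ordinal → Ordinal,
      IsoOn le1 le2 (Z ∪ Y.image f) g ∧ (∀ z ∈ Z, g z < d) ∧ ∀ y ∈ Y, g (f y) = y) :
    Block le1 le2 L (f q) (f η) x ∧ le1 (f q) x := by
  have hf : IsoOn le1 le2 Y f := by
    obtain ⟨g, hg, _, hgf⟩ := hfZ ∅ (by simp) (by simp)
    exact C2.iso hg hgf
  have hm : ∀ (Z : Finset Ordinal), ∀ y ∈ Y, f y ∈ Z ∪ Y.image f := fun Z y hy =>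
    Finset.mem_union_right _ (Finset.mem_image_of_mem _ hy)
  have hqη : f q ≤ f η := (hf q hqY η hηY).1.1 B.hq
  refine ⟨⟨hqη, hfx η hηY, ?_, ?_, ?_⟩, ?_⟩
  · intro l hl
    have := (hf.lt (hLY hl) hqY).1 (B.hL l hl)
    rwa [hfi l (hLY hl) (hL l hl)] at this
  · intro v hv w hw hwx
    obtain ⟨g, hg, hgZ, hgf⟩ := hfZ {v, w} (by simp [hwx, hv.trans_lt (hw.trans hwx)])
      (Finset.card_le_two.trans hM)
    have mv : v ∈ ({v, w} : Finset Ordinal) ∪ Y.image f := by simp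
    have mw : w ∈ ({v, w} : Finset Ordinal) ∪ Y.image f := by simp
    have e1 := (hg v mv _ (hm _ η hηY)).1.1 hv
    have e2 := (hg.lt (hm _ η hηY) mw).1 hw
    rw [hgf η hηY] at e1 e2
    rw [(hg v mv w mw).2.1, (hg v mv _ (hm _ q hqY)).2.1, hgf q hqY]
    exact B.B1 _ e1 _ e2 (hgZ w (by simp))
  · intro v hv w hw hwx hvw
    obtain ⟨g, hg, hgZ, hgf⟩ := hfZ {v, w} (by simp [hwx, hv.trans_lt (hw.trans hwx)])
      (Finset.card_le_two.trans hM)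
    have mv : v ∈ ({v, w} : Finset Ordinal) ∪ Y.image f := by simp
    have mw : w ∈ ({v, w} : Finset Ordinal) ∪ Y.image f := by simp
    have e1 := (hg v mv _ (hm _ η hηY)).1.1 hv
    have e2 := (hg.lt (hm _ η hηY) mw).1 hw
    rw [hgf η hηY] at e1 e2
    have hgL := B.B2 _ e1 _ e2 (hgZ w (by simp)) ((hg v mv w mw).2.2.1 hvw)
    have h3 := hgf _ (hLY hgL)
    have h4 := hg.inj (hm _ _ (hLY hgL)) mv h3
    rw [hfi _ (hLY hgL) (hL _ hgL)] at h4
    rw [← h4]; exact hgL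
  · refine A.sup1 (hfx q hqY).le fun w hw => ?_
    obtain ⟨z, hz, hwz⟩ := (A.lim1 hxd h1).2 (max w (f η)) (max_lt hw (hfx η hηY))
    refine ⟨z, hz, (le_max_left _ _).trans_lt hwz, ?_⟩
    obtain ⟨g, hg, hgZ, hgf⟩ := hfZ {z} (by simpa using hz) (by simp; omega)
    have mz : z ∈ ({z} : Finset Ordinal) ∪ Y.image f := by simp
    have e1 := (hg _ (hm _ q hqY) z mz).1.1 (hqη.trans ((le_max_right _ _).trans hwz.le))
    rw [hgf q hqY] at e1
    rw [(hg _ (hm _ q hqY) z mz).2.1, hgf q hqY]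
    exact A.down1 e1 (hgZ z (by simp)).le hqd

def Chain2 (le2 : Ordinal → Ordinal → Prop) (L : Finset Ordinal) : Prop :=
  ∀ l ∈ L, ∀ y ∈ L, l < y → le2 l y

def TI (le1 le2 : Ordinal → Ordinal → Prop) (L : Finset Ordinal) : Prop :=
  Chain2 le2 L → ∀ a q η q' η', (∀ y ∈ L, le2 y a) → Block le1 le2 L q η a →
    Block le1 le2 L q' η' a → le1 q a → le1 q' a → ∀ ζ, η + ζ ≤ a → η' + ζ ≤ a →
    Tr le1 le2 L η η' ζ

lemma exists_stable {x : Ordinal} (hx : 0 < x) :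
    ∃ b0 < x, ∀ b, b0 ≤ b → b < x → b + (x - b0) = x := by
  obtain ⟨r, ⟨b0, hb0, rfl⟩, hmin⟩ := exists_least (P := fun r => ∃ b < x, r = x - b) ⟨_, 0, hx, rfl⟩
  refine ⟨b0, hb0, fun b h1 h2 => ?_⟩
  have h3 : x - b0 ≤ x - b := by
    by_contra h
    exact hmin _ (not_le.1 h) ⟨b, h2, rfl⟩
  have h4 : x - b ≤ x - b0 := by
    rw [Ordinal.sub_le]
    calc x = b0 + (x - b0) := (Ordinal.add_sub_cancel_of_le hb0.le).symm
      _ ≤ b + (x - b0) := by gcongr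
  rw [le_antisymm h3 h4, Ordinal.add_sub_cancel_of_le h2.le]

end PartD

section PartE

variable {le1 le2 : Ordinal → Ordinal → Prop}

lemma Ax.label_core (A : Ax le1 le2) {L : Finset Ordinal} {x q η q' η' ζ a' : Ordinal}
    (hTI : TI le1 le2 L) (hch : Chain2 le2 L) (hLx : ∀ l ∈ L, l < x) (hLx2 : ∀ l ∈ L, le2 l x)
    (B : Block le1 le2 L q η (η + ζ)) (B' : Block le1 le2 L q' η' (η' + ζ))
    (T : Tr le1 le2 L η η' ζ) (hqc : le1 q (η + ζ)) (hqc' : le1 q' (η' + ζ))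
    (hxq : x ≤ q) (hxc : le2 x (η + ζ)) (hxq' : le2 x q') (ha' : η' + ζ ≤ a') (hxa' : le2 x a') :
    le2 x (η' + ζ) := by
  classical
  have hxη : x ≤ η := hxq.trans B.hq
  have hxqle' : x ≤ q' := A.le_of2 hxq'
  have hxη' : x ≤ η' := hxqle'.trans B'.hq
  have hxc_lt : x < η + ζ := hxη.trans_lt B.ha
  have hxc_lt' : x < η' + ζ := hxη'.trans_lt B'.ha
  have hxL : x ∉ L := fun h => lt_irrefl _ (hLx x h)
  obtain ⟨hx0, hxlim⟩ := A.lim1 hxc_lt (A.le21 hxc)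
  have hclim := A.lim2 hxc_lt hxc
  obtain ⟨d, ⟨hcd, hxd⟩, hdmin⟩ := exists_least (P := fun d => η' + ζ ≤ d ∧ le2 x d) ⟨a', ha', hxa'⟩
  rcases hcd.eq_or_lt with h | hcd'
  · rw [h]; exact hxd
  have hxd_lt : x < d := hxc_lt'.trans hcd'
  have hno : ∀ w, η' < w → w < d → ¬ le2 x w := by
    intro w h1 h2 h3
    rcases lt_or_ge w (η' + ζ) with h | h
    · exact hxL (B'.B2 x hxη' w h1 h h3)
    · exact hdmin w h2 ⟨h, h3⟩
  -- star
  have star : ∀ Y1 : Finset Ordinal, (∀ y ∈ Y1, η' < y ∧ y < d) →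
      ∃ f1 : Ordinal → Ordinal, IsoL le1 le2 L Y1 f1 ∧ ∀ y ∈ Y1, η < f1 y ∧ f1 y < η + ζ := by
    intro Y1 hY1
    obtain ⟨f2, h2x, h2i, h2Z⟩ := A.c2 hxc (L ∪ {η}) Y1.card (by
      intro y hy
      simp only [Finset.mem_union, Finset.mem_singleton] at hy
      rcases hy with hy | rfl
      · exact (hLx y hy).trans hxc_lt
      · exact B.ha)
    have hη2 : f2 η < x := h2x η (by simp)
    obtain ⟨k, hk, hkx, hki⟩ := A.c1 (A.le21 hxd) (L ∪ {f2 η} ∪ Y1) (by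
      intro y hy
      simp only [Finset.mem_union, Finset.mem_singleton] at hy
      rcases hy with (hy | rfl) | hy
      · exact (hLx y hy).trans hxd_lt
      · exact hη2.trans hxd_lt
      · exact (hY1 y hy).2)
    obtain ⟨g, hg, hgZ, hgf⟩ := h2Z (Y1.image k) (by
      intro y hy
      obtain ⟨z, hz, rfl⟩ := Finset.mem_image.1 hy
      exact hkx z (by simp [hz])) Finset.card_image_le
    have fL : ∀ l ∈ L, f2 l = l := fun l hl => h2i l (by simp [hl]) (hLx l hl)
    have gL : ∀ l ∈ L, g l = l := by
      intro l hl
      have := hgf l (by simp [hl]); rwa [fL l hl] at this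
    have hmem : ∀ y ∈ L ∪ {η}, f2 y ∈ Y1.image k ∪ (L ∪ {η}).image f2 := fun y hy =>
      Finset.mem_union_right _ (Finset.mem_image_of_mem _ hy)
    have hkL : IsoL le1 le2 L Y1 k := hk.toL (by intro l hl; simp [hl]) (by intro l hl; simp [hl])
      (fun l hl => hki l (by simp [hl]) (hLx l hl))
    have hgL : IsoL le1 le2 L (Y1.image k) g := hg.toL (by
      intro l hl
      have := hmem l (by simp [hl])
      rwa [fL l hl] at this) (Finset.subset_union_left) gL
    refine ⟨_, hkL.comp hgL, fun y hy => ⟨?_, hgZ _ (Finset.mem_image_of_mem _ hy)⟩⟩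
    have e1 := (hk.lt (u := f2 η) (v := y) (by simp) (by simp [hy])).1
      (hη2.trans (hxη'.trans_lt (hY1 y hy).1))
    rw [hki (f2 η) (by simp) hη2] at e1
    have e2 := (hg.lt (hmem η (by simp))
      (Finset.mem_union_left _ (Finset.mem_image_of_mem k hy))).1 e1
    rwa [hgf η (by simp)] at e2
  -- v ≤₂ x with v < x implies v ∈ L
  have hvL : ∀ v < x, le2 v x → v ∈ L := by
    intro v hv hvx
    obtain ⟨f, hfx, hfi, hfZ⟩ := A.c2 hxc {v, η} 1 (by simp [B.ha, hv.trans hxc_lt])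
    obtain ⟨z, hz, hz1, hz2⟩ := A.lemE hxc_lt hxc (max v (f η)) (max_lt hv (hfx η (by simp)))
    have hvz : le2 v z := A.down2 ((le_max_left _ _).trans hz1.le) hz2 hvx
    obtain ⟨g, hg, hgZ, hgf⟩ := hfZ {z} (by simpa using hz) (by simp)
    have gv : g v = v := by
      have := hgf v (by simp); rwa [hfi v (by simp) hv] at this
    have mv : v ∈ ({z} : Finset Ordinal) ∪ ({v, η} : Finset Ordinal).image f := by
      refine Finset.mem_union_right _ (Finset.mem_image.2 ⟨v, by simp, hfi v (by simp) hv⟩)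
    have mz : z ∈ ({z} : Finset Ordinal) ∪ ({v, η} : Finset Ordinal).image f := by simp
    have mη : f η ∈ ({z} : Finset Ordinal) ∪ ({v, η} : Finset Ordinal).image f := by simp
    have e1 := (hg v mv z mz).2.2.1 hvz
    have e2 := (hg.lt mη mz).1 ((le_max_right _ _).trans_lt hz1)
    rw [gv] at e1
    rw [hgf η (by simp)] at e2
    exact B.B2 v (hv.le.trans hxη) _ e2 (hgZ z (by simp)) e1
  -- block extension
  have ext : ∀ r, η' + ζ ≤ r → r ≤ d → (∀ w, q' ≤ w → w < r → le1 q' w) →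
      Block le1 le2 L q' η' r := by
    intro r hr hrd hqr
    have hB1 : ∀ v ≤ η', ∀ w, η' < w → w < r → (le1 v w ↔ le1 v q') := by
      intro v hv w hw hwr
      constructor
      · intro h
        obtain ⟨w0, hw0, hw1⟩ : ∃ w0, η' < w0 ∧ w0 < η' + ζ := by
          obtain ⟨u, hu, hu2⟩ := hclim η B.ha
          exact ⟨sh η η' u, sh_gt _ hu2, sh_lt _ hu2.le hu⟩
        exact (B'.B1 v hv (min w w0) (lt_min hw hw0) ((min_le_right _ _).trans_lt hw1)).1
          (A.down1 (hv.trans (lt_min hw hw0).le) (min_le_left _ _) h)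
      · intro h
        exact A.trans1 h (hqr w (B'.hq.trans hw.le) hwr)
    refine ⟨B'.hq, B'.ha.trans_le hr, B'.hL, hB1, ?_⟩
    intro v hv w hw hwr hvw
    have h1 := (hB1 v hv w hw hwr).1 (A.le21 hvw)
    have hxw := hno w hw (hwr.trans_le hrd)
    rcases lt_or_ge v x with h | h
    · refine hvL v h (A.down2 h.le ?_ hvw)
      exact A.trans1 (A.le21 hxq') (hqr w (B'.hq.trans hw.le) hwr)
    · exact absurd (A.trans2 (A.down2 h h1 hxq') hvw) hxw
  have hqr : ∀ r, q' ≤ r → r ≤ d → le1 q' r := by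
    intro r
    induction r using WellFoundedLT.induction with
    | ind r ih =>
      intro h1 h2
      rcases le_or_gt r (η' + ζ) with hr | hr
      · exact A.down1 h1 hr hqc'
      have Br := ext r hr.le h2 (fun w h3 h4 => ih w h4 h3 (h4.le.trans h2))
      refine (A.ch1 _ _).2 ⟨h1, fun Y hY => ?_⟩
      set Y1 := Y.filter (η' < ·) with hY1
      have hY1' : ∀ y ∈ Y1, η' < y ∧ y < r := fun y hy =>
        ⟨(Finset.mem_filter.1 hy).2, hY y (Finset.mem_filter.1 hy).1⟩
      obtain ⟨f1, hf1, hf1'⟩ := star Y1 (fun y hy => ⟨(hY1' y hy).1, (hY1' y hy).2.trans_le h2⟩)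
      have hY0 : ∀ y ∈ Y.filter (· ≤ η') ∪ L ∪ {q'}, y ≤ η' := by
        intro y hy
        simp only [Finset.mem_union, Finset.mem_singleton, Finset.mem_filter] at hy
        rcases hy with (hy | hy) | rfl
        · exact hy.2
        · exact (B'.hL y hy).le.trans B'.hq
        · exact B'.hq
      have hG := A.glue Br B' (Y0 := Y.filter (· ≤ η') ∪ L ∪ {q'}) (Y1 := Y1) (f0 := fun x => x)
        (by simp) (by intro x hx; simp [hx]) (IsoOn.id _) hY0 hY0 rfl (fun _ _ => rfl)
        (hf1.comp (A.trIso T (S := Y1.image f1) (by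
          intro s hs
          obtain ⟨y, hy, rfl⟩ := Finset.mem_image.1 hs
          exact hf1' y hy))) hY1'
        (fun y hy => ⟨sh_gt _ (hf1' y hy).1, sh_lt _ (hf1' y hy).1.le (hf1' y hy).2⟩)
      have hG' := hG.mono (S := Y) (by
        intro y hy
        by_cases hy' : y ≤ η'
        · simp [hy, hy']
        · simp [hY1, hy, not_le.1 hy'])
      set F := pw η' (fun x => x) (fun x => sh η η' (f1 x)) with hF
      have hFc : ∀ y ∈ Y, F y < η' + ζ := by
        intro y hy
        by_cases hy' : y ≤ η'
        · rw [hF, pw_le _ _ hy']; exact hy'.trans_lt B'.ha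
        · rw [hF, pw_gt _ _ (not_le.1 hy')]
          have hy1 : y ∈ Y1 := Finset.mem_filter.2 ⟨hy, not_le.1 hy'⟩
          exact sh_lt _ (hf1' y hy1).1.le (hf1' y hy1).2
      obtain ⟨k, hk, hkq, hki⟩ := A.c1 hqc' (Y.image F) (by
        intro s hs
        obtain ⟨y, hy, rfl⟩ := Finset.mem_image.1 hs
        exact hFc y hy)
      refine ⟨_, hG'.comp hk, fun y hy => hkq _ (Finset.mem_image_of_mem _ hy), fun y hy hyq => ?_⟩
      have e : F y = y := by rw [hF, pw_le _ _ (hyq.le.trans B'.hq)]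
      have := hki (F y) (Finset.mem_image_of_mem _ hy) (by rw [e]; exact hyq)
      rw [this, e]
  have Bd := ext d hcd le_rfl (fun w h1 h2 => hqr w h1 h2.le)
  have hqd := hqr d ((B'.hq.trans B'.ha.le).trans hcd) le_rfl
  obtain ⟨b0, hb0, hstab⟩ := exists_stable hx0
  refine (A.ch2 _ _).2 ⟨hxc_lt'.le, fun Y m hY => ?_⟩
  -- Step A
  set YA := Y.filter (· ≤ η') ∪ {q', η', b0} ∪ L with hYA
  have hYAη : ∀ y ∈ YA, y ≤ η' := by
    intro y hy
    simp only [hYA, Finset.mem_union, Finset.mem_singleton, Finset.mem_filter,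
      Finset.mem_insert] at hy
    rcases hy with (hy | rfl | rfl | rfl) | hy
    · exact hy.2
    · exact B'.hq
    · exact le_rfl
    · exact hb0.le.trans hxη'
    · exact (hLx y hy).le.trans hxη'
  obtain ⟨f0, h0x, h0i, h0Z⟩ := A.c2 hxd YA (max m 2)
    (fun y hy => (hYAη y hy).trans_lt (B'.ha.trans_le hcd))
  have hq'A : q' ∈ YA := by simp [hYA]
  have hη'A : η' ∈ YA := by simp [hYA]
  have hb0A : b0 ∈ YA := by simp [hYA]
  have hLA : L ⊆ YA := by intro l hl; simp [hYA, hl]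
  have h0iso : IsoOn le1 le2 YA f0 := by
    obtain ⟨g, hg, _, hgf⟩ := h0Z ∅ (by simp) (by simp)
    exact C2.iso hg hgf
  obtain ⟨BA, hqA⟩ := A.copy_block hxd_lt (A.le21 hxd) Bd hqd hLx (le_max_right m 2) hq'A hη'A hLA
    h0x h0i h0Z
  have hb0η' : b0 ≤ f0 η' := by
    have := (h0iso b0 hb0A η' hη'A).1.1 (hb0.le.trans hxη')
    rwa [h0i b0 hb0A hb0] at this
  have f0L : ∀ l ∈ L, f0 l = l := fun l hl => h0i l (hLA hl) (hLx l hl)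
  -- Step B
  set Y1 := Y.filter (η' < ·) with hY1
  have hY1' : ∀ s ∈ Y1, η' < s ∧ s < η' + ζ := fun s hs =>
    ⟨(Finset.mem_filter.1 hs).2, hY s (Finset.mem_filter.1 hs).1⟩
  set YB := {q, η, b0} ∪ L ∪ Y1.image (sh η' η) with hYB
  obtain ⟨f2, h2x, h2i, h2Z⟩ := A.c2 hxc YB (max m 2) (by
    intro y hy
    simp only [hYB, Finset.mem_union, Finset.mem_singleton, Finset.mem_image,
      Finset.mem_insert] at hy
    rcases hy with ((rfl | rfl | rfl) | hy) | ⟨z, hz, rfl⟩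
    · exact B.hq.trans_lt B.ha
    · exact B.ha
    · exact hb0.trans hxc_lt
    · exact (hLx y hy).trans hxc_lt
    · exact sh_lt _ (hY1' z hz).1.le (hY1' z hz).2)
  have hqB : q ∈ YB := by simp [hYB]
  have hηB : η ∈ YB := by simp [hYB]
  have hb0B : b0 ∈ YB := by simp [hYB]
  have hLB : L ⊆ YB := by intro l hl; simp [hYB, hl]
  have h1B : ∀ s ∈ Y1, sh η' η s ∈ YB := fun s hs =>
    Finset.mem_union_right _ (Finset.mem_image_of_mem _ hs)
  have h2iso : IsoOn le1 le2 YB f2 := by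
    obtain ⟨g, hg, _, hgf⟩ := h2Z ∅ (by simp) (by simp)
    exact C2.iso hg hgf
  obtain ⟨BB, hqBB⟩ := A.copy_block hxc_lt (A.le21 hxc) B hqc hLx (le_max_right m 2) hqB hηB hLB
    h2x h2i h2Z
  have hb0η : b0 ≤ f2 η := by
    have := (h2iso b0 hb0B η hηB).1.1 (hb0.le.trans hxη)
    rwa [h2i b0 hb0B hb0] at this
  have f2L : ∀ l ∈ L, f2 l = l := fun l hl => h2i l (hLB hl) (hLx l hl)
  have eA : f0 η' + (x - b0) = x := hstab _ hb0η' (h0x _ hη'A)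
  have eB : f2 η + (x - b0) = x := hstab _ hb0η (h2x _ hηB)
  -- Step C
  have TC : Tr le1 le2 L (f2 η) (f0 η') (x - b0) :=
    hTI hch x _ _ _ _ hLx2 BB BA hqBB hqA _ eB.le eA.le
  -- Step D
  have hgt : ∀ s ∈ Y1, f2 η < f2 (sh η' η s) := fun s hs =>
    (h2iso.lt hηB (h1B s hs)).1 (sh_gt _ (hY1' s hs).1)
  have hlt : ∀ s ∈ Y1, f2 (sh η' η s) < f2 η + (x - b0) := fun s hs => by
    rw [eB]; exact h2x _ (h1B s hs)
  have hF1gt : ∀ s ∈ Y1, f0 η' < sh (f2 η) (f0 η') (f2 (sh η' η s)) := fun s hs =>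
    sh_gt _ (hgt s hs)
  have hF1lt : ∀ s ∈ Y1, sh (f2 η) (f0 η') (f2 (sh η' η s)) < x := fun s hs => by
    have := sh_lt (f0 η') (hgt s hs).le (hlt s hs)
    rwa [eA] at this
  refine ⟨pw η' f0 (fun y => sh (f2 η) (f0 η') (f2 (sh η' η y))), ?_, ?_, ?_⟩
  · intro y hy
    by_cases hy' : y ≤ η'
    · rw [pw_le _ _ hy']
      exact h0x y (by simp [hYA, hy, hy'])
    · rw [pw_gt _ _ (not_le.1 hy')]
      exact hF1lt y (Finset.mem_filter.2 ⟨hy, not_le.1 hy'⟩)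
  · intro y hy hyx
    have hy' : y ≤ η' := hyx.le.trans hxη'
    rw [pw_le _ _ hy']
    exact h0i y (by simp [hYA, hy, hy']) hyx
  intro Z hZ hm
  set Z0 := Z.filter (· ≤ f0 η') with hZ0
  set Z1 := Z.filter (f0 η' < ·) with hZ1
  have hZ1' : ∀ z ∈ Z1, f0 η' < z ∧ z < f0 η' + (x - b0) := fun z hz =>
    ⟨(Finset.mem_filter.1 hz).2, by rw [eA]; exact hZ z (Finset.mem_filter.1 hz).1⟩
  obtain ⟨g0, hg0, hg0Z, hg0f⟩ := h0Z Z0 (fun z hz => hZ z (Finset.mem_filter.1 hz).1)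
    ((Finset.card_filter_le _ _).trans (hm.trans (le_max_left _ _)))
  obtain ⟨g2, hg2, hg2Z, hg2f⟩ := h2Z (Z1.image (sh (f0 η') (f2 η))) (by
    intro y hy
    obtain ⟨z, hz, rfl⟩ := Finset.mem_image.1 hy
    have := sh_lt (f2 η) (hZ1' z hz).1.le (hZ1' z hz).2
    rwa [eB] at this)
    (Finset.card_image_le.trans ((Finset.card_filter_le _ _).trans (hm.trans (le_max_left _ _))))
  set S2 := Z1.image (sh (f0 η') (f2 η)) ∪ YB.image f2 with hS2
  have m2 : ∀ y ∈ YB, f2 y ∈ S2 := fun y hy =>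
    Finset.mem_union_right _ (Finset.mem_image_of_mem _ hy)
  have m0 : ∀ y ∈ YA, f0 y ∈ Z0 ∪ YA.image f0 := fun y hy =>
    Finset.mem_union_right _ (Finset.mem_image_of_mem _ hy)
  set W := Z1 ∪ Y1.image (fun y => sh (f2 η) (f0 η') (f2 (sh η' η y))) with hW
  have hW' : ∀ s ∈ W, f0 η' < s ∧ s < f0 η' + (x - b0) ∧
      sh (f0 η') (f2 η) s ∈ S2 ∧ g2 (sh (f0 η') (f2 η) s) < η + ζ := by
    intro s hs
    rcases Finset.mem_union.1 hs with hs | hs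
    · have := Finset.mem_image_of_mem (sh (f0 η') (f2 η)) hs
      exact ⟨(hZ1' s hs).1, (hZ1' s hs).2, Finset.mem_union_left _ this, hg2Z _ this⟩
    · obtain ⟨y, hy, rfl⟩ := Finset.mem_image.1 hs
      refine ⟨hF1gt y hy, by rw [eA]; exact hF1lt y hy, ?_⟩
      rw [sh_sh _ (hgt y hy).le]
      refine ⟨m2 _ (h1B y hy), ?_⟩
      rw [hg2f _ (h1B y hy)]
      exact sh_lt _ (hY1' y hy).1.le (hY1' y hy).2
  have hgW : ∀ s ∈ W, η < g2 (sh (f0 η') (f2 η) s) := by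
    intro s hs
    have := (hg2.lt (m2 η hηB) (hW' s hs).2.2.1).1 (sh_gt _ (hW' s hs).1)
    rwa [hg2f η hηB] at this
  have hc := A.conj TC T (S := W) (fun s hs => ⟨(hW' s hs).1, (hW' s hs).2.1⟩) (f := g2)
    (hg2.toL (by
      intro l hl
      have := m2 l (hLB hl)
      rwa [f2L l hl] at this) (by
      intro u hu
      obtain ⟨s, hs, rfl⟩ := Finset.mem_image.1 hu
      exact (hW' s hs).2.2.1) (by
      intro l hl
      have := hg2f l (hLB hl)
      rwa [f2L l hl] at this)) (fun s hs => ⟨hgW s hs, (hW' s hs).2.2.2⟩)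
  have hY0 : ∀ y ∈ Z0 ∪ YA.image f0, y ≤ f0 η' := by
    intro y hy
    rcases Finset.mem_union.1 hy with hy | hy
    · exact (Finset.mem_filter.1 hy).2
    · obtain ⟨z, hz, rfl⟩ := Finset.mem_image.1 hy
      exact (h0iso z hz η' hη'A).1.1 (hYAη z hz)
  have hG := A.glue BA B' (Y0 := Z0 ∪ YA.image f0) (Y1 := W) (f0 := g0)
    (m0 q' hq'A) (by
      intro l hl
      have := m0 l (hLA hl)
      rwa [f0L l hl] at this) hg0 hY0 (by
      intro y hy
      have := (hg0 y hy _ (m0 η' hη'A)).1.1 (hY0 y hy)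
      rwa [hg0f η' hη'A] at this) (hg0f q' hq'A) (by
      intro l hl
      have := hg0f l (hLA hl)
      rwa [f0L l hl] at this) hc
    (fun s hs => ⟨(hW' s hs).1, by rw [← eA]; exact (hW' s hs).2.1⟩)
    (fun s hs => ⟨sh_gt _ (hgW s hs), sh_lt _ (hgW s hs).le (hW' s hs).2.2.2⟩)
  refine ⟨_, hG.mono ?_, ?_, ?_⟩
  · intro s hs
    rcases Finset.mem_union.1 hs with hs | hs
    · by_cases hy' : s ≤ f0 η'
      · exact Finset.mem_union_left _ (Finset.mem_union_left _ (Finset.mem_filter.2 ⟨hs, hy'⟩))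
      · exact Finset.mem_union_right _ (Finset.mem_union_left _
          (Finset.mem_filter.2 ⟨hs, not_le.1 hy'⟩))
    · obtain ⟨y, hy, rfl⟩ := Finset.mem_image.1 hs
      by_cases hy' : y ≤ η'
      · rw [pw_le _ _ hy']
        exact Finset.mem_union_left _ (m0 y (by simp [hYA, hy, hy']))
      · rw [pw_gt _ _ (not_le.1 hy')]
        have hy1 : y ∈ Y1 := Finset.mem_filter.2 ⟨hy, not_le.1 hy'⟩
        exact Finset.mem_union_right _ (Finset.mem_union_right _
          (Finset.mem_image_of_mem (fun y => sh (f2 η) (f0 η') (f2 (sh η' η y))) hy1))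
  · intro z hz
    by_cases hy' : z ≤ f0 η'
    · rw [pw_le _ _ hy']
      have hz0 : z ∈ Z0 ∪ YA.image f0 := Finset.mem_union_left _ (Finset.mem_filter.2 ⟨hz, hy'⟩)
      have := (hg0 z hz0 _ (m0 η' hη'A)).1.1 hy'
      rw [hg0f η' hη'A] at this
      exact this.trans_lt B'.ha
    · have hz1 : z ∈ W := Finset.mem_union_left _ (Finset.mem_filter.2 ⟨hz, not_le.1 hy'⟩)
      rw [pw_gt _ _ (not_le.1 hy')]
      exact sh_lt _ (hgW z hz1).le (hW' z hz1).2.2.2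
  · intro y hy
    by_cases hy' : y ≤ η'
    · have hyA : y ∈ YA := by simp [hYA, hy, hy']
      rw [pw_le _ _ hy', pw_le _ _ (hY0 _ (m0 y hyA)), hg0f y hyA]
    · have hy1 : y ∈ Y1 := Finset.mem_filter.2 ⟨hy, not_le.1 hy'⟩
      rw [pw_gt _ _ (not_le.1 hy'), pw_gt _ _ (hF1gt y hy1), sh_sh _ (hgt y hy1).le,
        hg2f _ (h1B y hy1), sh_sh _ (not_le.1 hy').le]

end PartE

section PartF

variable {le1 le2 : Ordinal → Ordinal → Prop}

lemma Ax.label_step (A : Ax le1 le2) {L : Finset Ordinal} {x q0 η0 q0' η0' ζ a' : Ordinal}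
    (hch : Chain2 le2 L) (hx : x ∈ L) (hTI : TI le1 le2 (L.filter (· < x)))
    (B : Block le1 le2 L q0 η0 (η0 + ζ)) (B' : Block le1 le2 L q0' η0' (η0' + ζ))
    (T : Tr le1 le2 L η0 η0' ζ) (hqa : le1 q0' a') (ha : η0' + ζ ≤ a') (hxa : le2 x a')
    (hxc : le2 x (η0 + ζ)) : le2 x (η0' + ζ) := by
  have hxη : x < η0 := (B.hL x hx).trans_le B.hq
  have hxη' : x < η0' := (B'.hL x hx).trans_le B'.hq
  have hxc' : x < η0 + ζ := hxη.trans B.ha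
  have hq0c' : le1 q0' (η0' + ζ) := A.down1 (B'.hq.trans B'.ha.le) ha hqa
  by_cases hnc : ∃ e < η0 + ζ, η0 ≤ e ∧ ∀ w, e < w → w < η0 + ζ → ¬ le2 x w
  · obtain ⟨q, η, hq, hη, hqη, hqc, Bq⟩ := A.block_refine B hx hch (A.lim2 hxc' hxc) hnc
    obtain ⟨ε, rfl⟩ : ∃ ε, η = η0 + ε := ⟨η - η0, (Ordinal.add_sub_cancel_of_le hη).symm⟩
    have hε : ε < ζ := by simpa using Bq.ha
    obtain ⟨ζ', rfl⟩ : ∃ ζ', ζ = ε + ζ' := ⟨ζ - ε, (Ordinal.add_sub_cancel_of_le hε.le).symm⟩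
    obtain ⟨q', hqq, hqc', hxq'⟩ : ∃ q', ((q = q0 ∧ q' = q0') ∨
        ∃ κ, 0 < κ ∧ κ ≤ ε ∧ q = η0 + κ ∧ q' = η0' + κ) ∧ le1 q' (η0' + (ε + ζ')) ∧ le2 x q' := by
      rcases hq with h | ⟨h1, h2⟩
      · exact ⟨q0', Or.inl ⟨h, rfl⟩, hq0c', A.down2 (B'.hL x hx).le hqa hxa⟩
      · obtain ⟨κ, k1, k2, rfl⟩ := exists_add h1 (hqη.trans_lt Bq.ha)
        refine ⟨η0' + κ, Or.inr ⟨κ, k1, by simpa using hqη, rfl, rfl⟩, ?_, ?_⟩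
        · exact A.step1 (fun y hy => (B.hL y hy).le.trans B.hq) B' T k1 k2 hqc
        · exact ((T κ k1 k2).2 x hx).1 h2
    have Bq' := A.block_transfer B B' T (Finset.filter_subset _ _) hε hqq Bq
    have hxq : x ≤ q := by
      rcases hq with h | ⟨h1, h2⟩
      · rw [h]; exact (B.hL x hx).le
      · exact (hxη.trans h1).le
    have T' := Tr.shift (Finset.filter_subset (· < x) L) T
    rw [← add_assoc] at Bq Bq' hqc hqc' hxc ha ⊢
    exact A.label_core hTI
      (fun l hl y hy => hch l (Finset.mem_filter.1 hl).1 y (Finset.mem_filter.1 hy).1)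
      (fun l hl => (Finset.mem_filter.1 hl).2)
      (fun l hl => hch l (Finset.mem_filter.1 hl).1 x hx (Finset.mem_filter.1 hl).2)
      Bq Bq' T' hqc hqc' hxq hxc hxq' ha hxa
  · push Not at hnc
    refine A.sup2 (hxη'.trans B'.ha).le fun w hw => ?_
    have h1 : sh η0' η0 (max w η0') < η0 + ζ := sh_lt _ (le_max_right _ _) (max_lt hw B'.ha)
    have h2 : η0 ≤ sh η0' η0 (max w η0') := le_self_add
    obtain ⟨w2, h3, h4, h5⟩ := hnc _ h1 h2
    obtain ⟨ξ, x1, x2, rfl⟩ := exists_add (h2.trans_lt h3) h4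
    refine ⟨η0' + ξ, by simpa using x2, ?_, ((T ξ x1 x2).2 x hx).1 h5⟩
    have h6 : max w η0' - η0' < ξ := by simpa [sh] using h3
    refine (le_max_left w η0').trans_lt ?_
    rw [← Ordinal.add_sub_cancel_of_le (le_max_right w η0')]
    simpa using h6

lemma Ax.ti_all (A : Ax le1 le2) (n : ℕ) : ∀ L : Finset Ordinal, L.card = n → TI le1 le2 L := by
  induction n using Nat.strong_induction_on with
  | _ n ih =>
    intro L hn hch a q η q' η' hLa B B' hq hq' ζ hζ hζ'
    have hTI : ∀ x ∈ L, TI le1 le2 (L.filter (· < x)) := by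
      intro x hx
      refine ih _ ?_ _ rfl
      rw [← hn]
      refine Finset.card_lt_card ((Finset.filter_ssubset).2 ⟨x, hx, lt_irrefl _⟩)
    intro ξ
    induction ξ using WellFoundedLT.induction with
    | ind ξ ihξ =>
      intro h0 h1
      have T : Tr le1 le2 L η η' ξ := fun t t1 t2 => ihξ t t2 t1 (t2.trans h1)
      have e1 : η + ξ ≤ a := le_trans (by gcongr) hζ
      have e2 : η' + ξ ≤ a := le_trans (by gcongr) hζ'
      have Bx := B.mono (b := η + ξ) (by simpa using h0) e1
      have Bx' := B'.mono (b := η' + ξ) (by simpa using h0) e2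
      have hL : ∀ x ∈ L, x ≤ η := fun y hy => (B.hL y hy).le.trans B.hq
      have hL' : ∀ x ∈ L, x ≤ η' := fun y hy => (B'.hL y hy).le.trans B'.hq
      refine ⟨fun t t0 t1 => ⟨⟨A.step1 hL Bx' T t0 t1, A.step1 hL' Bx T.symm t0 t1⟩,
        ⟨A.step2 hL Bx' T t0 t1, A.step2 hL' Bx T.symm t0 t1⟩⟩, fun x hx => ⟨?_, ?_⟩⟩
      · exact A.label_step hch hx (hTI x hx) Bx Bx' T hq' e2 (hLa x hx)
      · exact A.label_step hch hx (hTI x hx) Bx' Bx T.symm hq e1 (hLa x hx)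

lemma Ax.ti (A : Ax le1 le2) (L : Finset Ordinal) : TI le1 le2 L := A.ti_all _ L rfl

end PartF

section PartG

variable {le1 le2 : Ordinal → Ordinal → Prop}

structure Good (le1 le2 : Ordinal → Ordinal → Prop) (U : Finset Ordinal) (α γ : Ordinal) :
    Prop where
  lt : γ < α
  g1 : le1 γ α
  gU : ∀ u ∈ U, u < γ
  ns : ∀ β, γ < β → ¬ le2 γ β
  pU : ∀ y < γ, le2 y γ → y ∈ U

noncomputable def up (γ α y : Ordinal) : Ordinal := if y < γ then y else sh γ α y

noncomputable def dn (γ α y : Ordinal) : Ordinal := if y < γ then y else sh α γ y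

lemma up_dn {γ α y : Ordinal} (h : y < γ ∨ α ≤ y) : up γ α (dn γ α y) = y := by
  unfold up dn
  by_cases hy : y < γ
  · simp [hy]
  · have h' : α ≤ y := h.resolve_left hy
    have : ¬ sh α γ y < γ := not_lt.2 le_self_add
    simp only [hy, this, if_false]
    exact sh_sh _ h'

lemma dn_lt {γ α y ζ : Ordinal} (h : y < γ ∨ (α ≤ y ∧ y < α + ζ)) : dn γ α y < γ + ζ := by
  unfold dn
  by_cases hy : y < γ
  · simp only [hy, if_true]
    exact hy.trans_le le_self_add
  · have h' := h.resolve_left hy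
    simp only [hy, if_false]
    exact sh_lt _ h'.1 h'.2

lemma up_lt {γ α y ζ : Ordinal} (hγ : γ < α) (h : y < γ + ζ) : up γ α y < α + ζ := by
  unfold up
  by_cases hy : y < γ
  · simp only [hy, if_true]
    exact (hy.trans hγ).trans_le le_self_add
  · simp only [hy, if_false]
    exact sh_lt _ (not_lt.1 hy) h

lemma exists_add0 {η y ζ : Ordinal} (h : η ≤ y) (h2 : y < η + ζ) :
    ∃ ξ, ξ < ζ ∧ y = η + ξ := by
  have e := Ordinal.add_sub_cancel_of_le h
  refine ⟨y - η, ?_, e.symm⟩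
  rw [← e] at h2
  simpa using h2

lemma Ax.up_iso (A : Ax le1 le2) {U : Finset Ordinal} {α γ ζ : Ordinal}
    (hU : ∀ x, x ∈ U ↔ le2 x α ∧ x ≠ α) (hg : Good le1 le2 U α γ)
    (NS : ∀ β, α < β → ¬ le2 α β) (hζ : γ + ζ ≤ α) (h1 : ∀ t < ζ, le1 α (α + t))
    (T : Tr le1 le2 U γ α ζ) {S : Finset Ordinal} (hS : ∀ s ∈ S, s < γ + ζ) :
    IsoOn le1 le2 S (up γ α) := by
  have hγt : ∀ t < ζ, le1 γ (γ + t) := fun t ht =>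
    A.down1 le_self_add (le_trans (by gcongr) hζ) hg.g1
  have key : ∀ u v, u < γ + ζ → v < γ + ζ → u < v → up γ α u < up γ α v ∧
      (le1 u v ↔ le1 (up γ α u) (up γ α v)) ∧ (le2 u v ↔ le2 (up γ α u) (up γ α v)) := by
    intro u v hu hv huv
    by_cases hvγ : v < γ
    · have huγ := huv.trans hvγ
      simp [up, hvγ, huγ, huv]
    obtain ⟨t, ht, rfl⟩ := exists_add0 (not_lt.1 hvγ) hv
    have ev : up γ α (γ + t) = α + t := by
      unfold up; rw [if_neg hvγ, sh_add]
    rw [ev]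
    by_cases huγ : u < γ
    · have eu : up γ α u = u := by unfold up; rw [if_pos huγ]
      rw [eu]
      refine ⟨(huγ.trans hg.lt).trans_le le_self_add, ⟨fun h => ?_, fun h => ?_⟩,
        ⟨fun h => ?_, fun h => ?_⟩⟩
      · exact A.trans1 (A.trans1 (A.down1 huγ.le le_self_add h) hg.g1) (h1 t ht)
      · exact A.trans1 (A.down1 huγ.le (hg.lt.le.trans le_self_add) h) (hγt t ht)
      · have huU : u ∈ U := hg.pU u huγ (A.down2 huγ.le (hγt t ht) h)
        rcases eq_or_ne t 0 with rfl | h0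
        · rw [add_zero]; exact ((hU u).1 huU).1
        · exact ((T t (pos_iff_ne_zero.2 h0) ht).2 u huU).1 h
      · have huα : le2 u α := A.down2 (huγ.trans hg.lt).le (h1 t ht) h
        have huU : u ∈ U := (hU u).2 ⟨huα, (huγ.trans hg.lt).ne⟩
        rcases eq_or_ne t 0 with rfl | h0
        · rw [add_zero]; exact A.down2 huγ.le hg.g1 huα
        · exact ((T t (pos_iff_ne_zero.2 h0) ht).2 u huU).2 h
    · obtain ⟨s, hs, rfl⟩ := exists_add0 (not_lt.1 huγ) hu
      have eu : up γ α (γ + s) = α + s := by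
        unfold up; rw [if_neg huγ, sh_add]
      rw [eu]
      have hst : s < t := by simpa using huv
      refine ⟨by simpa using hst, ?_⟩
      rcases eq_or_ne s 0 with rfl | h0
      · simp only [add_zero] at huv ⊢
        have : α < α + t := by simpa using hst
        exact ⟨iff_of_true (hγt t ht) (h1 t ht), iff_of_false (hg.ns _ huv) (NS _ this)⟩
      · exact (T t (zero_le.trans_lt hst) ht).1 s (pos_iff_ne_zero.2 h0) hst
  intro u hu v hv
  rcases lt_trichotomy u v with h | h | h
  · obtain ⟨k1, k2, k3⟩ := key u v (hS u hu) (hS v hv) h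
    exact ⟨iff_of_true h.le k1.le, k2, k3⟩
  · subst h
    exact ⟨by simp, iff_of_true (A.refl1 _) (A.refl1 _), iff_of_true (A.refl2 _) (A.refl2 _)⟩
  · obtain ⟨k1, k2, k3⟩ := key v u (hS v hv) (hS u hu) h
    have a1 := not_le.2 h
    have a2 := not_le.2 k1
    exact ⟨iff_of_false a1 a2, iff_of_false (fun h => a1 (A.le_of1 h)) (fun h => a2 (A.le_of1 h)),
      iff_of_false (fun h => a1 (A.le_of2 h)) (fun h => a2 (A.le_of2 h))⟩

lemma Ax.dn_iso (A : Ax le1 le2) {U : Finset Ordinal} {α γ ζ : Ordinal}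
    (hU : ∀ x, x ∈ U ↔ le2 x α ∧ x ≠ α) (hg : Good le1 le2 U α γ)
    (NS : ∀ β, α < β → ¬ le2 α β) (hζ : γ + ζ ≤ α) (h1 : ∀ t < ζ, le1 α (α + t))
    (T : Tr le1 le2 U γ α ζ) {Y : Finset Ordinal}
    (hY : ∀ y ∈ Y, y < γ ∨ (α ≤ y ∧ y < α + ζ)) : IsoOn le1 le2 Y (dn γ α) := by
  refine C2.iso (g := up γ α) (A.up_iso hU hg NS hζ h1 T ?_)
    fun y hy => up_dn ((hY y hy).imp_right And.left)
  intro s hs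
  simp only [Finset.empty_union, Finset.mem_image] at hs
  obtain ⟨y, hy, rfl⟩ := hs
  exact dn_lt (hY y hy)

lemma Good.block (A : Ax le1 le2) {U : Finset Ordinal} {α γ : Ordinal}
    (hg : Good le1 le2 U α γ) : Block le1 le2 U γ γ α := by
  have h : ∀ w, γ < w → w < α → le1 γ w := fun w h1 h2 => A.down1 h1.le h2.le hg.g1
  refine ⟨le_rfl, hg.lt, hg.gU, fun v hv w hw hwa => ⟨fun h1 => A.down1 hv hw.le h1,
    fun h1 => A.trans1 h1 (h w hw hwa)⟩, fun v hv w hw hwa h2 => ?_⟩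
  rcases hv.eq_or_lt with rfl | hv
  · exact absurd h2 (hg.ns w hw)
  · exact hg.pU v hv (A.down2 hv.le (h w hw hwa) h2)

lemma Ax.good_cof (A : Ax le1 le2) {U : Finset Ordinal} {α : Ordinal}
    (hU : ∀ x, x ∈ U ↔ le2 x α ∧ x ≠ α) (h0 : 0 < α)
    (hP : ∀ w < α, ∃ p < α, w < p ∧ le1 p α) :
    ∀ w < α, ∃ γ < α, w < γ ∧ Good le1 le2 U α γ := by
  intro w hw
  have hUα : ∀ u ∈ U, u < α := fun u hu =>
    lt_of_le_of_ne (A.le_of2 ((hU u).1 hu).1) ((hU u).1 hu).2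
  obtain ⟨δ, hδα, hδ1, hδ⟩ := fin_bd h0 hP (insert w U) (by
    intro y hy
    rcases Finset.mem_insert.1 hy with rfl | hy
    · exact hw
    · exact hUα y hy)
  have hδw : w < δ := hδ w (Finset.mem_insert_self _ _)
  have hδU : ∀ u ∈ U, u < δ := fun u hu => hδ u (Finset.mem_insert_of_mem hu)
  obtain ⟨r, ⟨hrU, hrδ⟩, hrmin⟩ := exists_least (P := fun y => y ∉ U ∧ le2 y δ)
    ⟨δ, fun h => lt_irrefl _ (hδU δ h), A.refl2 _⟩
  have hrδ' := A.le_of2 hrδ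
  have hex : ∃ v, δ < v ∧ v < α ∧ le1 v α ∧ ¬ le2 r v := by
    by_contra hcon
    push Not at hcon
    refine hrU ((hU r).2 ⟨A.sup2 (hrδ'.trans hδα.le) fun w hw => ?_, (hrδ'.trans_lt hδα).ne⟩)
    obtain ⟨p, p1, p2, p3⟩ := hP (max w δ) (max_lt hw hδα)
    exact ⟨p, p1, (le_max_left _ _).trans_lt p2, hcon p ((le_max_right _ _).trans_lt p2) p1 p3⟩
  obtain ⟨γ, ⟨h1, h2, h3, h4⟩, hmin⟩ := exists_least hex
  have hmin' : ∀ v, δ < v → v < γ → le1 v γ → le2 r v := by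
    intro v v1 v2 v3
    by_contra hc
    exact hmin v v2 ⟨v1, v2.trans h2, A.trans1 v3 h3, hc⟩
  refine ⟨γ, h2, hδw.trans h1, h2, h3, fun u hu => (hδU u hu).trans h1, ?_, ?_⟩
  · intro β hβ hc
    refine h4 (A.sup2 (hrδ'.trans h1.le) fun w hw => ?_)
    obtain ⟨d, d1, d2, d3⟩ := A.lemE hβ hc (max w δ) (max_lt hw h1)
    exact ⟨d, d1, (le_max_left _ _).trans_lt d2, hmin' d ((le_max_right _ _).trans_lt d2) d1 d3⟩
  · intro y hy hyγ
    by_contra hyU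
    rcases le_or_gt y δ with h | h
    · have hyδ : le2 y δ := A.down2 h (A.down1 h1.le h2.le hδ1) hyγ
      have hry : r ≤ y := by
        by_contra hc
        exact hrmin y (not_le.1 hc) ⟨hyU, hyδ⟩
      exact h4 (A.trans2 (A.down2 hry (A.le21 hyδ) hrδ) hyγ)
    · exact h4 (A.trans2 (hmin' y h hy (A.le21 hyγ)) hyγ)

lemma Ax.main_core (A : Ax le1 le2) {U : Finset Ordinal} {α : Ordinal}
    (hU : ∀ x, x ∈ U ↔ le2 x α ∧ x ≠ α) (h0 : 0 < α)
    (hP : ∀ w < α, ∃ p < α, w < p ∧ le1 p α) : ∃ β, α < β ∧ le2 α β := by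
  by_contra NS
  push Not at NS
  have hUα : ∀ u ∈ U, u < α := fun u hu =>
    lt_of_le_of_ne (A.le_of2 ((hU u).1 hu).1) ((hU u).1 hu).2
  have hU2 : ∀ u ∈ U, le2 u α := fun u hu => ((hU u).1 hu).1
  have hch : Chain2 le2 U := fun l hl y hy hly => A.down2 hly.le (A.le21 (hU2 y hy)) (hU2 l hl)
  obtain ⟨b0, hb0, hst⟩ := exists_stable h0
  set ρ := α - b0 with hρ
  have hcof : ∀ w < α, ∃ γ < α, w < γ ∧ (Good le1 le2 U α γ ∧ b0 < γ) := by
    intro w hw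
    obtain ⟨γ, g1, g2, g3⟩ := A.good_cof hU h0 hP (max w b0) (max_lt hw hb0)
    exact ⟨γ, g1, (le_max_left _ _).trans_lt g2, g3, (le_max_right _ _).trans_lt g2⟩
  have hadd : ∀ γ, Good le1 le2 U α γ → b0 < γ → γ + ρ = α := fun γ hg hb => hst γ hb.le hg.lt
  have hTr : ∀ γ, Good le1 le2 U α γ → b0 < γ → ∀ γ', Good le1 le2 U α γ' → b0 < γ' →
      Tr le1 le2 U γ γ' ρ := fun γ hg hb γ' hg' hb' =>
    A.ti U hch α γ γ γ' γ' hU2 (hg.block A) (hg'.block A) hg.g1 hg'.g1 ρ (hadd γ hg hb).le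
      (hadd γ' hg' hb').le
  obtain ⟨γ0, -, -, hg0, hbγ0⟩ := hcof 0 h0
  obtain ⟨p, p1, p2, p3⟩ := hP γ0 hg0.lt
  obtain ⟨l, l0, l1, rfl⟩ := exists_add (ζ := ρ) p2 (by rw [hadd γ0 hg0 hbγ0]; exact p1)
  have hl : ∀ γ, Good le1 le2 U α γ → b0 < γ → le1 (γ + l) α := by
    intro γ hg hb
    have e := hadd γ hg hb
    have B' : Block le1 le2 U γ γ (γ + ρ) := by rw [e]; exact hg.block A
    have := A.step1 (fun x hx => (hg0.gU x hx).le) B' (hTr γ0 hg0 hbγ0 γ hg hb) l0 l1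
      (by rw [hadd γ0 hg0 hbγ0]; exact p3)
    rwa [e] at this
  -- choice of a good ordinal above a finite set
  have hpick : ∀ Y : Finset Ordinal, ∃ γ, Good le1 le2 U α γ ∧ b0 < γ ∧ ∀ y ∈ Y, y < α → y < γ := by
    intro Y
    obtain ⟨γ, -, ⟨g1, g2⟩, g3⟩ := fin_bd h0 hcof (Y.filter (· < α))
      (fun y hy => (Finset.mem_filter.1 hy).2)
    exact ⟨γ, g1, g2, fun y hy hya => g3 y (Finset.mem_filter.2 ⟨hy, hya⟩)⟩
  have main : ∀ ζ, ζ ≤ l → le1 α (α + ζ) ∧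
      (0 < ζ → ∀ γ, Good le1 le2 U α γ → b0 < γ → TrAt le1 le2 U γ α ζ) := by
    intro ζ
    induction ζ using WellFoundedLT.induction with
    | ind ζ ih =>
      intro hζl
      have i1 : ∀ t < ζ, le1 α (α + t) := fun t ht => (ih t ht (ht.le.trans hζl)).1
      have iT : ∀ γ, Good le1 le2 U α γ → b0 < γ → Tr le1 le2 U γ α ζ := fun γ hg hb t t0 t1 =>
        (ih t t1 (t1.le.trans hζl)).2 t0 γ hg hb
      have hζα : ∀ γ, Good le1 le2 U α γ → b0 < γ → γ + ζ ≤ α := fun γ hg hb =>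
        (A.le_of1 (hl γ hg hb)).trans' (by gcongr)
      have hY' : ∀ Y : Finset Ordinal, (∀ y ∈ Y, y < α + ζ) → ∀ γ, (∀ y ∈ Y, y < α → y < γ) →
          ∀ y ∈ Y, y < γ ∨ (α ≤ y ∧ y < α + ζ) := by
        intro Y hY γ hγ y hy
        rcases lt_or_ge y α with h | h
        · exact Or.inl (hγ y hy h)
        · exact Or.inr ⟨h, hY y hy⟩
      have hα1 : le1 α (α + ζ) := by
        refine (A.ch1 _ _).2 ⟨le_self_add, fun Y hY => ?_⟩
        obtain ⟨γ, hg, hb, hγ⟩ := hpick Y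
        have hYγ := hY' Y hY γ hγ
        refine ⟨dn γ α, A.dn_iso hU hg NS (hζα γ hg hb) i1 (iT γ hg hb) hYγ,
          fun y hy => (dn_lt (hYγ y hy)).trans_le (hζα γ hg hb), fun y hy hya => ?_⟩
        unfold dn; rw [if_pos (hγ y hy hya)]
      refine ⟨hα1, fun h0ζ γ hg hb => ?_⟩
      have hαw : ∀ w, α < w → w < α + ζ → le1 α w := fun w w1 w2 => A.down1 w1.le w2.le hα1
      have Bα : Block le1 le2 U α α (α + ζ) := by
        refine ⟨le_rfl, by simpa using h0ζ, hUα, fun v hv w hw hwa =>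
          ⟨fun h1 => A.down1 hv hw.le h1, fun h1 => A.trans1 h1 (hαw w hw hwa)⟩,
          fun v hv w hw hwa h2 => ?_⟩
        rcases hv.eq_or_lt with rfl | hv
        · exact absurd h2 (NS w hw)
        · exact (hU v).2 ⟨A.down2 hv.le (hαw w hw hwa) h2, hv.ne⟩
      have Bγ : Block le1 le2 U γ γ (γ + ζ) :=
        (hg.block A).mono (by simpa using h0ζ) (hζα γ hg hb)
      have T := iT γ hg hb
      have hL : ∀ x ∈ U, x ≤ γ := fun x hx => (hg.gU x hx).le
      have hL' : ∀ x ∈ U, x ≤ α := fun x hx => (hUα x hx).le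
      refine ⟨fun t t0 t1 => ⟨⟨A.step1 hL Bα T t0 t1, A.step1 hL' Bγ T.symm t0 t1⟩,
        ⟨A.step2 hL Bα T t0 t1, A.step2 hL' Bγ T.symm t0 t1⟩⟩, fun x hx => ⟨fun hxγ => ?_, ?_⟩⟩
      · refine (A.ch2 _ _).2 ⟨(hL' x hx).trans le_self_add, fun Y m hY => ?_⟩
        obtain ⟨γ', hg', hb', hγ'⟩ := hpick Y
        have hYγ := hY' Y hY γ' hγ'
        have hxγ' : le2 x (γ' + ζ) :=
          ((hTr γ hg hb γ' hg' hb' ζ h0ζ (hζl.trans_lt l1)).2 x hx).1 hxγ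
        obtain ⟨f, hfa, hfi, hf⟩ := A.c2 hxγ' (Y.image (dn γ' α)) m (by
          intro y hy
          obtain ⟨z, hz, rfl⟩ := Finset.mem_image.1 hy
          exact dn_lt (hYγ z hz))
        refine ⟨fun y => f (dn γ' α y), fun y hy => hfa _ (Finset.mem_image_of_mem _ hy), ?_, ?_⟩
        · intro y hy hyx
          have e : dn γ' α y = y := by
            unfold dn; rw [if_pos (hyx.trans (hg'.gU x hx))]
          have := hfi _ (Finset.mem_image_of_mem _ hy) (by rw [e]; exact hyx)
          dsimp only
          rw [this, e]
        · intro Z hZ hm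
          obtain ⟨g, hgi, hgZ, hgf⟩ := hf Z hZ hm
          have e : (Y.image (dn γ' α)).image f = Y.image (fun y => f (dn γ' α y)) := by
            rw [Finset.image_image]; rfl
          rw [e] at hgi
          have hgf' : ∀ y ∈ Y, g (f (dn γ' α y)) = dn γ' α y := fun y hy =>
            hgf _ (Finset.mem_image_of_mem _ hy)
          refine ⟨_, hgi.comp (g := up γ' α) (A.up_iso hU hg' NS (hζα γ' hg' hb') i1
            (iT γ' hg' hb') ?_), fun z hz => up_lt hg'.lt (hgZ z hz), fun y hy => ?_⟩
          · intro s hs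
            obtain ⟨z, hz, rfl⟩ := Finset.mem_image.1 hs
            rcases Finset.mem_union.1 hz with hz | hz
            · exact hgZ z hz
            · obtain ⟨y, hy, rfl⟩ := Finset.mem_image.1 hz
              rw [hgf' y hy]
              exact dn_lt (hYγ y hy)
          · dsimp only
            rw [hgf' y hy]
            exact up_dn ((hYγ y hy).imp_right And.left)
      · exact A.label_step hch hx (A.ti _) Bα Bγ T.symm hg.g1 (hζα γ hg hb) (hU2 x hx)
  have i1 : ∀ t < l, le1 α (α + t) := fun t ht => (main t ht.le).1
  have iT : ∀ γ, Good le1 le2 U α γ → b0 < γ → Tr le1 le2 U γ α l := fun γ hg hb t t0 t1 =>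
    (main t t1.le).2 t0 γ hg hb
  have hαl : α < α + l := by simpa using l0
  refine NS _ hαl ((A.ch2 _ _).2 ⟨hαl.le, fun Y m hY => ?_⟩)
  obtain ⟨γ, hg, hb, hγ⟩ := hpick Y
  have hlα := A.le_of1 (hl γ hg hb)
  have hYγ : ∀ y ∈ Y, y < γ ∨ (α ≤ y ∧ y < α + l) := by
    intro y hy
    rcases lt_or_ge y α with h | h
    · exact Or.inl (hγ y hy h)
    · exact Or.inr ⟨h, hY y hy⟩
  refine ⟨dn γ α, fun y hy => (dn_lt (hYγ y hy)).trans_le hlα, fun y hy hya => ?_, ?_⟩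
  · unfold dn; rw [if_pos (hγ y hy hya)]
  · intro Z hZ hm
    obtain ⟨k, hk, hka, hki⟩ := A.c1 (hl γ hg hb) (Z ∪ Y.image (dn γ α)) (by
      intro y hy
      rcases Finset.mem_union.1 hy with hy | hy
      · exact hZ y hy
      · obtain ⟨z, hz, rfl⟩ := Finset.mem_image.1 hy
        exact (dn_lt (hYγ z hz)).trans_le hlα)
    refine ⟨_, hk.comp (g := up γ α) (A.up_iso hU hg NS hlα i1 (iT γ hg hb) ?_),
      fun z hz => up_lt hg.lt (hka z (Finset.mem_union_left _ hz)), fun y hy => ?_⟩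
    · intro s hs
      obtain ⟨z, hz, rfl⟩ := Finset.mem_image.1 hs
      exact hka z hz
    · skip
      rw [hki _ (Finset.mem_union_right _ (Finset.mem_image_of_mem _ hy)) (dn_lt (hYγ y hy))]
      exact up_dn ((hYγ y hy).imp_right And.left)

lemma Ax.fin_preds (A : Ax le1 le2) {α : Ordinal} (hα : α < OneInfty le2) :
    ∃ U : Finset Ordinal, ∀ x, x ∈ U ↔ le2 x α ∧ x ≠ α := by
  have h1 := notMem_of_lt_csInf' hα
  have h2 : {x | le2 x α ∧ x ≠ α}.Finite := by
    by_contra hinf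
    refine h1 fun n => ?_
    obtain ⟨t, ht, hn⟩ := Set.Infinite.exists_subset_card_eq hinf n
    refine ⟨fun i => t.orderEmbOfFin hn i, fun i => ?_, fun i hi => ?_⟩
    · have := ht (t.orderEmbOfFin_mem hn i)
      exact lt_of_le_of_ne (A.le_of2 this.1) this.2
    · have m1 := ht (t.orderEmbOfFin_mem hn ⟨i, Nat.lt_of_succ_lt hi⟩)
      have m2 := ht (t.orderEmbOfFin_mem hn ⟨i + 1, hi⟩)
      have hlt : t.orderEmbOfFin hn ⟨i, Nat.lt_of_succ_lt hi⟩ < t.orderEmbOfFin hn ⟨i + 1, hi⟩ :=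
        (t.orderEmbOfFin hn).strictMono (by simp)
      exact ⟨A.down2 hlt.le (A.le21 m2.1) m1.1, hlt.ne⟩
  exact ⟨h2.toFinset, fun x => by simp⟩

end PartG

theorem stmt17 (le1 le2 : Ordinal → Ordinal → Prop) (h : IsR2Pair le1 le2)
    (α : Ordinal) (hα : α < OneInfty le2) :
    (∃ m, Lt1 le1 m α ∧ ∀ γ, Lt1 le1 γ α → γ ≤ m) ↔
      ((∃ γ, Lt1 le1 γ α) ∧ ¬ ∃ β, Lt2 le2 α β) := by
  have A := h.ax
  constructor
  · rintro ⟨m, hm, hmax⟩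
    refine ⟨⟨m, hm⟩, ?_⟩
    rintro ⟨β, hβ, hne⟩
    obtain ⟨d, d1, d2, d3⟩ := A.lemE (lt_of_le_of_ne (A.le_of2 hβ) hne) hβ m
      (lt_of_le_of_ne (A.le_of1 hm.1) hm.2)
    exact absurd (hmax d ⟨d3, d1.ne⟩) (not_le.2 d2)
  · rintro ⟨⟨γ, hγ⟩, hns⟩
    by_contra hcon
    push Not at hcon
    obtain ⟨U, hU⟩ := A.fin_preds hα
    have hγα := lt_of_le_of_ne (A.le_of1 hγ.1) hγ.2
    obtain ⟨s, hs, hsmin⟩ := exists_least (P := fun s => ∀ p, Lt1 le1 p α → p ≤ s)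
      ⟨α, fun p hp => A.le_of1 hp.1⟩
    have hsα : s ≤ α := by
      by_contra hc
      exact hsmin α (not_le.1 hc) fun p hp => A.le_of1 hp.1
    have hγs : γ < s := by
      obtain ⟨γ', h1, h2⟩ := hcon γ hγ
      exact h2.trans_le (hs γ' h1)
    have hcofs : ∀ w < s, ∃ p < s, w < p ∧ le1 p α := by
      intro w hw
      have := hsmin w hw
      push Not at this
      obtain ⟨p, hp, hwp⟩ := this
      obtain ⟨p', hp', hpp⟩ := hcon p hp
      exact ⟨p, hpp.trans_le (hs p' hp'), hwp, hp.1⟩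
    have hsα' : s = α := by
      by_contra hne
      obtain ⟨p, hp, hsp⟩ := hcon s ⟨A.sup1' (zero_le.trans_lt hγs) hsα hcofs, hne⟩
      exact absurd (hs p hp) (not_le.2 hsp)
    subst hsα'
    obtain ⟨β, h1, h2⟩ := A.main_core hU (zero_le.trans_lt hγs) hcofs
    exact hns ⟨β, h2, h1.ne⟩
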